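/- arXiv:1710.06742 — 7 statements merged into one kernel-verified Lean document; each statement's English description precedes it below -/
import Mathlib

section
/- The linear map sending a polynomial vector field q to curl(r × q), where r = (x,y,z) is the position vector field, is injective on the bubble space B^k. -/
/-!
The vector identity `curl (r × q) = r div q - 2 q - E q`, with `E = x ∂ₓ + y ∂_y + z ∂_z` the Euler
operator acting componentwise, shows that `curl (r × q) = 0` forces `(E + 2) q = r div q`.
Since `E` multiplies the coefficient of `x^m` by `|m|`, comparing coefficients gives `q = p r` for
some polynomial `p`: a monomial `x^m` of `q i` has the form `x_i x^n`, and then `x_j x^n` occurs in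
`q j` for every `j`. In the bubble space this gives `n j + 1 ≤ k` for all `j`, whereas `x_i x^n`
occurring in `q i` requires `n j = k` for some `j ≠ i`; hence `q = 0`.
-/

open MvPolynomial

/-- Membership in the bubble space `B^k` on ℝ³. -/
def memB (k : ℕ) (q : Fin 3 → MvPolynomial (Fin 3) ℝ) : Prop :=
  ∀ i : Fin 3, ∀ m ∈ (q i).support, (∀ j : Fin 3, m j ≤ k) ∧ (∃ j : Fin 3, j ≠ i ∧ m j = k)

/-- The position vector field `r = (x, y, z)`. -/
noncomputable def posVF : Fin 3 → MvPolynomial (Fin 3) ℝ := fun i => X i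

/-- Cross product of polynomial vector fields on ℝ³. -/
noncomputable def cross (a b : Fin 3 → MvPolynomial (Fin 3) ℝ) :
    Fin 3 → MvPolynomial (Fin 3) ℝ :=
  ![a 1 * b 2 - a 2 * b 1, a 2 * b 0 - a 0 * b 2, a 0 * b 1 - a 1 * b 0]

/-- Curl of a polynomial vector field on ℝ³. -/
noncomputable def curl (w : Fin 3 → MvPolynomial (Fin 3) ℝ) :
    Fin 3 → MvPolynomial (Fin 3) ℝ :=
  ![pderiv 1 (w 2) - pderiv 2 (w 1), pderiv 2 (w 0) - pderiv 0 (w 2),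
    pderiv 0 (w 1) - pderiv 1 (w 0)]

/-- The divergence of a polynomial vector field on ℝ³. -/
noncomputable def divVF (q : Fin 3 → MvPolynomial (Fin 3) ℝ) : MvPolynomial (Fin 3) ℝ :=
  ∑ j, pderiv j (q j)

lemma memB_sub {k : ℕ} {q q' : Fin 3 → MvPolynomial (Fin 3) ℝ} (hq : memB k q)
    (hq' : memB k q') : memB k (q - q') := by
  classical
  intro i m hm
  rcases Finset.mem_union.mp (support_sub _ _ _ hm) with h | h
  · exact hq i m h
  · exact hq' i m h

lemma curl_cross_sub (q q' : Fin 3 → MvPolynomial (Fin 3) ℝ) :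
    curl (cross posVF (q - q')) = curl (cross posVF q) - curl (cross posVF q') := by
  funext i
  fin_cases i <;> simp [curl, cross, posVF] <;> ring

lemma curl_cross_posVF (q : Fin 3 → MvPolynomial (Fin 3) ℝ) (i : Fin 3) :
    curl (cross posVF q) i = X i * divVF q - 2 * q i - ∑ j, X j * pderiv j (q i) := by
  fin_cases i <;>
    simp [curl, cross, posVF, divVF, Fin.sum_univ_three, pderiv_X] <;> ring

lemma coeff_X_mul_pderiv (p : MvPolynomial (Fin 3) ℝ) (j : Fin 3) (m : Fin 3 →₀ ℕ) :
    coeff m (X j * pderiv j p) = m j * coeff m p := by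
  classical
  rw [coeff_X_mul']
  split_ifs with h
  · have hj : m j ≠ 0 := Finsupp.mem_support_iff.mp h
    obtain ⟨n, rfl⟩ : ∃ n, m = n + Finsupp.single j 1 :=
      ⟨m - Finsupp.single j 1, (tsub_add_cancel_of_le
        (Finsupp.single_le_iff.mpr (Nat.one_le_iff_ne_zero.mpr hj))).symm⟩
    rw [add_tsub_cancel_right, coeff_pderiv]
    simp [mul_comm]
  · simp [Finsupp.notMem_support_iff.mp h]

/-- The equation `(E + 2) q = r div q` in coefficients. -/
lemma coeff_X_mul_divVF {q : Fin 3 → MvPolynomial (Fin 3) ℝ} (h : curl (cross posVF q) = 0)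
    (i : Fin 3) (m : Fin 3 →₀ ℕ) :
    coeff m (X i * divVF q) = (2 + ∑ j, (m j : ℝ)) * coeff m (q i) := by
  have h1 := congrArg (coeff m) ((curl_cross_posVF q i).symm.trans (congrFun h i))
  rw [← map_ofNat (C : ℝ →+* MvPolynomial (Fin 3) ℝ) 2] at h1
  simp only [coeff_sub, coeff_sum, coeff_X_mul_pderiv, coeff_C_mul, Pi.zero_apply,
    coeff_zero, ← Finset.sum_mul] at h1
  linear_combination h1

lemma eq_zero_of_memB {k : ℕ} {q : Fin 3 → MvPolynomial (Fin 3) ℝ} (hq : memB k q)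
    (h : curl (cross posVF q) = 0) : q = 0 := by
  classical
  funext i
  by_contra hne
  obtain ⟨m, hm⟩ := ne_zero_iff.mp hne
  have hD : coeff m (X i * divVF q) ≠ 0 := by
    rw [coeff_X_mul_divVF h]
    exact mul_ne_zero (by positivity) hm
  rw [coeff_X_mul'] at hD
  split_ifs at hD with hi
  · obtain ⟨-, j, hji, hj⟩ := hq i m (mem_support_iff.mpr hm)
    -- With `n = m - e_i`, the monomial `x_j x^n` occurs in `q j`, with `x_j`-degree `k + 1`.
    have hj' : coeff (Finsupp.single j 1 + (m - Finsupp.single i 1)) (q j) ≠ 0 := by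
      intro h0
      apply hD
      rw [← coeff_X_mul _ j, coeff_X_mul_divVF h, h0, mul_zero]
    have hle := (hq j _ (mem_support_iff.mpr hj')).1 j
    simp [hji.symm, hj] at hle
  · exact hD rfl

/-- the map `q ↦ curl (r × q)` is injective on the bubble space `B^k`. -/
theorem curl_cross_injective_on_bubbles (k : ℕ) (hk : 1 ≤ k) :
    ∀ q q' : Fin 3 → MvPolynomial (Fin 3) ℝ, memB k q → memB k q' →
      curl (cross posVF q) = curl (cross posVF q') → q = q' := by
  intro q q' hq hq' h
  exact sub_eq_zero.mp (eq_zero_of_memB (memB_sub hq hq')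
    (by rw [curl_cross_sub, h, sub_self]))
end

section
/- The subspaces RT^{k−1} and B̃^k of polynomial vector fields on ℝ³ intersect only in the zero vector field, and the dimension of their sum V^k = RT^{k−1} + B̃^k equals 3(k+1)³, the dimension of the space of vector fields whose components each have degree at most k in each variable. -/
/-!
The proof rests on one identity. Write `E = ∑ l, x_l ∂_l` for the Euler operator and let
`v = curl (r × q)`. Since `v = r div q - 2 q - E q`, eliminating the term parallel to `r` gives,
for `i ≠ j` and `w = x_j q_i - x_i q_j`,
`x_j v_i - x_i v_j = -(w + E w)` (`X_mul_curl_cross_sub`).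
The operator `w ↦ w + E w` multiplies the coefficient of a monomial of total degree `d` by
`1 + d`, so it does not lose any coefficient (`coeff_euler`).

Let `q ∈ B^k` with `v ∈ RT^{k-1}`, and let `m` be an exponent of `q_i`; then `m_j = k` for some
`j ≠ i`. In the identity, look at the exponent `m + e_j`, whose `j`-th entry is `k + 1`.
On the left, `x_j v_i` contributes the coefficient of `v_i` at `m`, which is zero because
`m_j = k > k - 1`, and `x_i v_j` has degree at most `k` in `x_j`. On the right, `x_i q_j` has
degree at most `k` in `x_j` as well, so only the coefficient of `q_i` at `m` survives, and it
must be zero. Hence `q = 0` (`eq_zero_of_memB_of_memRT`). This single fact gives both that the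
two spaces meet only in `0` and that `q ↦ curl (r × q)` is injective on `B^k`.

Consequently `(q, v) ↦ curl (r × q) + v` is an isomorphism from `B^k × RT^{k-1}` onto the sum.
Both factors are products of spaces spanned by monomials, and for each component the exponents
allowed in `B^k` and those allowed in `RT^{k-1}` partition the box `{0, …, k}³`, whence the
dimension `3 (k + 1)³`.
-/

open MvPolynomial

/-- Membership in the Raviart–Thomas space `RT^{k-1}` on ℝ³. -/
def memRT (k : ℕ) (v : Fin 3 → MvPolynomial (Fin 3) ℝ) : Prop :=
  ∀ i j : Fin 3, (v i).degreeOf j ≤ if i = j then k else k - 1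

/-- Membership in `B̃^k = curl (r × B^k)`. -/
def memBt (k : ℕ) (v : Fin 3 → MvPolynomial (Fin 3) ℝ) : Prop :=
  ∃ q : Fin 3 → MvPolynomial (Fin 3) ℝ, memB k q ∧ v = curl (cross posVF q)

/-- The Euler operator multiplies the coefficient at `n` by the total degree of `n`. -/
lemma coeff_euler (w : MvPolynomial (Fin 3) ℝ) (n : Fin 3 →₀ ℕ) :
    coeff n (∑ l, X l * pderiv l w) = (∑ l, (n l : ℝ)) * coeff n w := by
  classical
  have h (l : Fin 3) : coeff n (X l * pderiv l w) = (n l : ℝ) * coeff n w := by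
    induction w using MvPolynomial.induction_on' with
    | add p q hp hq => simp [mul_add, hp, hq]
    | monomial m a =>
      rw [X_mul_pderiv_monomial, coeff_smul, coeff_monomial]
      split_ifs with hm
      · simp [hm]
      · simp
  rw [coeff_sum, Finset.sum_mul]
  exact Finset.sum_congr rfl fun l _ => h l

lemma X_mul_curl_cross_sub (q : Fin 3 → MvPolynomial (Fin 3) ℝ) {i j : Fin 3} (hij : i ≠ j) :
    X j * curl (cross posVF q) i - X i * curl (cross posVF q) j =
      -((X j * q i - X i * q j) + ∑ l, X l * pderiv l (X j * q i - X i * q j)) := by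
  fin_cases i <;> fin_cases j <;> first | exact absurd rfl hij | skip
  all_goals
    simp [curl, cross, posVF, Fin.sum_univ_three, pderiv_X, Pi.single_apply]
    ring

/-- A polynomial of degree at most `k` in `x_j`, multiplied by another variable `x_i`, has no
monomial of degree `k + 1` in `x_j`. -/
lemma coeff_X_mul_eq_zero {k : ℕ} {p : MvPolynomial (Fin 3) ℝ} {i j : Fin 3} (hij : i ≠ j)
    (hp : p.degreeOf j ≤ k) {n : Fin 3 →₀ ℕ} (hn : k < n j) : coeff n (X i * p) = 0 := by
  rw [← notMem_support_iff]
  intro h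
  have h1 := degreeOf_le_iff.mp (le_refl (degreeOf j (X i * p))) n h
  rw [mul_comm, degreeOf_mul_X_of_ne p hij.symm] at h1
  omega

/-- Only the zero element of `B^k` is mapped into `RT^{k-1}` by `q ↦ curl (r × q)`. -/
lemma eq_zero_of_memB_of_memRT {k : ℕ} (hk : 1 ≤ k) {q : Fin 3 → MvPolynomial (Fin 3) ℝ}
    (hq : memB k q) (hv : memRT k (curl (cross posVF q))) : q = 0 := by
  funext i
  ext m
  by_contra hm
  obtain ⟨-, j, hji, hmj⟩ := hq i m (mem_support_iff.mpr hm)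
  have hij : i ≠ j := hji.symm
  set n := Finsupp.single j 1 + m with hn
  have hnj : k < n j := by simp [hn, hmj]
  have hqj : coeff n (X i * q j) = 0 :=
    coeff_X_mul_eq_zero hij (degreeOf_le_iff.mpr fun m' h' => (hq j m' h').1 j) hnj
  have hvj : coeff n (X i * curl (cross posVF q) j) = 0 :=
    coeff_X_mul_eq_zero hij (by simpa using hv j j) hnj
  have hvi : coeff m (curl (cross posVF q) i) = 0 := by
    rw [← notMem_support_iff]
    intro h
    have := degreeOf_le_iff.mp (hv i j) m h
    rw [if_neg hij] at this
    omega
  have hshift (p : MvPolynomial (Fin 3) ℝ) : coeff n (X j * p) = coeff m p := coeff_X_mul m j p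
  have key := congrArg (coeff n) (X_mul_curl_cross_sub q hij)
  rw [coeff_neg, coeff_add, coeff_euler, coeff_sub, coeff_sub, hqj, hvj, hshift, hshift,
    hvi] at key
  have hpos : (0 : ℝ) ≤ ∑ l, (n l : ℝ) := Finset.sum_nonneg fun l _ => Nat.cast_nonneg _
  have hprod : (1 + ∑ l, (n l : ℝ)) * coeff m (q i) = 0 := by linarith
  rcases mul_eq_zero.mp hprod with h | h
  · linarith
  · exact hm (by simpa using h)

/-- The map `q ↦ curl (r × q)` as a linear map. -/
noncomputable def curlCross :
    (Fin 3 → MvPolynomial (Fin 3) ℝ) →ₗ[ℝ] (Fin 3 → MvPolynomial (Fin 3) ℝ) where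
  toFun q := curl (cross posVF q)
  map_add' p q := by
    funext i
    fin_cases i <;> simp [curl, cross, posVF] <;> ring
  map_smul' c q := by
    funext i
    fin_cases i <;> simp [curl, cross, posVF, smul_sub, smul_add]

/-- The exponents of the monomials of degree at most `k` in each variable. -/
def boxExp (k : ℕ) : Set (Fin 3 →₀ ℕ) := {m | ∀ j, m j ≤ k}

/-- The exponents allowed in the `i`-th component of a field in `B^k`. -/
def bubbleExp (k : ℕ) (i : Fin 3) : Set (Fin 3 →₀ ℕ) :=
  {m | (∀ j, m j ≤ k) ∧ ∃ j, j ≠ i ∧ m j = k}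

/-- The exponents allowed in the `i`-th component of a field in `RT^{k-1}`. -/
def rtExp (k : ℕ) (i : Fin 3) : Set (Fin 3 →₀ ℕ) := {m | ∀ j, m j ≤ if i = j then k else k - 1}

lemma memB_iff {k : ℕ} {q : Fin 3 → MvPolynomial (Fin 3) ℝ} :
    memB k q ↔ ∀ i, q i ∈ restrictSupport ℝ (bubbleExp k i) := Iff.rfl

lemma memRT_iff {k : ℕ} {v : Fin 3 → MvPolynomial (Fin 3) ℝ} :
    memRT k v ↔ ∀ i, v i ∈ restrictSupport ℝ (rtExp k i) := by
  simp only [memRT, degreeOf_le_iff, mem_restrictSupport_iff]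
  exact forall_congr' fun i => ⟨fun h m hm j => h j m hm, fun h j m hm => h hm j⟩

lemma boxExp_eq (k : ℕ) :
    boxExp k = ↑(Finset.Iic (Finsupp.equivFunOnFinite.symm fun _ : Fin 3 => k)) := by
  ext m
  simp [boxExp, Finsupp.le_def]

lemma finite_boxExp (k : ℕ) : (boxExp k).Finite := by
  rw [boxExp_eq]
  exact Finset.finite_toSet _

lemma ncard_boxExp {k : ℕ} (hk : 1 ≤ k) : (boxExp k).ncard = (k + 1) ^ 3 := by
  have hs : (Finsupp.equivFunOnFinite.symm fun _ : Fin 3 => k).support = Finset.univ := by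
    ext j
    simp
    omega
  rw [boxExp_eq, Set.ncard_coe_finset, Finsupp.card_Iic, hs]
  simp

lemma bubbleExp_union_rtExp {k : ℕ} (i : Fin 3) :
    bubbleExp k i ∪ rtExp k i = boxExp k := by
  ext m
  simp only [bubbleExp, rtExp, boxExp, Set.mem_union, Set.mem_ofPred_eq]
  constructor
  · rintro (h | h) j
    · exact h.1 j
    · have := h j
      split_ifs at this <;> omega
  · intro h
    by_cases hj : ∃ j, j ≠ i ∧ m j = k
    · exact Or.inl ⟨h, hj⟩
    · refine Or.inr fun j => ?_
      have h1 := h j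
      split_ifs with hij
      · exact h1
      · have : m j ≠ k := fun h2 => hj ⟨j, fun h3 => hij h3.symm, h2⟩
        omega

lemma disjoint_bubbleExp_rtExp {k : ℕ} (hk : 1 ≤ k) (i : Fin 3) :
    Disjoint (bubbleExp k i) (rtExp k i) := by
  rw [Set.disjoint_left]
  rintro m ⟨-, j, hji, hmj⟩ hm
  have := hm j
  rw [if_neg hji.symm] at this
  omega

lemma finite_bubbleExp (k : ℕ) (i : Fin 3) : (bubbleExp k i).Finite :=
  (finite_boxExp k).subset (bubbleExp_union_rtExp i ▸ Set.subset_union_left)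

lemma finite_rtExp (k : ℕ) (i : Fin 3) : (rtExp k i).Finite :=
  (finite_boxExp k).subset (bubbleExp_union_rtExp i ▸ Set.subset_union_right)

lemma finite_restrictSupport {s : Set (Fin 3 →₀ ℕ)} (hs : s.Finite) :
    Module.Finite ℝ (restrictSupport ℝ s) :=
  have := hs.to_subtype
  Module.Finite.of_basis (basisRestrictSupport ℝ s)

lemma finrank_restrictSupport (s : Set (Fin 3 →₀ ℕ)) :
    Module.finrank ℝ (restrictSupport ℝ s) = s.ncard :=
  Module.finrank_eq_nat_card_basis (basisRestrictSupport ℝ s)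

/-- The space `B^k × RT^{k-1}`, as a product of spaces of polynomials with prescribed exponents. -/
abbrev PairSpace (k : ℕ) : Type :=
  (∀ i, restrictSupport ℝ (bubbleExp k i)) × (∀ i, restrictSupport ℝ (rtExp k i))

/-- The map `(q, v) ↦ curl (r × q) + v` on `B^k × RT^{k-1}`. -/
noncomputable def pairMap (k : ℕ) : PairSpace k →ₗ[ℝ] (Fin 3 → MvPolynomial (Fin 3) ℝ) :=
  LinearMap.coprod (curlCross ∘ₗ LinearMap.piMap fun i => (restrictSupport ℝ (bubbleExp k i)).subtype)
    (LinearMap.piMap fun i => (restrictSupport ℝ (rtExp k i)).subtype)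

lemma pairMap_apply (k : ℕ) (x : PairSpace k) :
    pairMap k x = curl (cross posVF fun i => (x.1 i : MvPolynomial (Fin 3) ℝ)) +
      fun i => (x.2 i : MvPolynomial (Fin 3) ℝ) := rfl

lemma finrank_pairSpace {k : ℕ} (hk : 1 ≤ k) :
    Module.finrank ℝ (PairSpace k) = 3 * (k + 1) ^ 3 := by
  have h1 (i : Fin 3) := finite_restrictSupport (finite_bubbleExp k i)
  have h2 (i : Fin 3) := finite_restrictSupport (finite_rtExp k i)
  have h3 (i : Fin 3) : (bubbleExp k i).ncard + (rtExp k i).ncard = (k + 1) ^ 3 := by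
    rw [← Set.ncard_union_eq (disjoint_bubbleExp_rtExp hk i) (finite_bubbleExp k i)
      (finite_rtExp k i), bubbleExp_union_rtExp, ncard_boxExp hk]
  rw [Module.finrank_prod, Module.finrank_pi_fintype, Module.finrank_pi_fintype,
    ← Finset.sum_add_distrib]
  simp [finrank_restrictSupport, h3]

lemma pairMap_injective {k : ℕ} (hk : 1 ≤ k) : Function.Injective (pairMap k) := by
  rw [injective_iff_map_eq_zero]
  rintro ⟨q, v⟩ h
  rw [pairMap_apply] at h
  have hc := eq_neg_of_add_eq_zero_left h
  have hq : (fun i => (q i : MvPolynomial (Fin 3) ℝ)) = 0 := by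
    refine eq_zero_of_memB_of_memRT hk (memB_iff.mpr fun i => (q i).2) ?_
    rw [hc]
    exact memRT_iff.mpr fun i => Submodule.neg_mem _ (v i).2
  have hv : (fun i => (v i : MvPolynomial (Fin 3) ℝ)) = 0 := by
    have h0 : curl (cross posVF 0) = 0 := map_zero curlCross
    rw [hq, h0, zero_add] at h
    exact h
  refine Prod.ext ?_ ?_
  · funext i
    exact Subtype.ext (congrFun hq i)
  · funext i
    exact Subtype.ext (congrFun hv i)

lemma span_eq_range_pairMap (k : ℕ) :
    Submodule.span ℝ {v : Fin 3 → MvPolynomial (Fin 3) ℝ | memRT k v ∨ memBt k v} =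
      LinearMap.range (pairMap k) := by
  apply le_antisymm
  · rw [Submodule.span_le]
    rintro v (hv | ⟨q, hq, rfl⟩)
    · have h0 : curl (cross posVF 0) = 0 := map_zero curlCross
      refine ⟨(0, fun i => ⟨v i, memRT_iff.mp hv i⟩), ?_⟩
      rw [pairMap_apply]
      change curl (cross posVF 0) + v = v
      rw [h0, zero_add]
    · refine ⟨(fun i => ⟨q i, memB_iff.mp hq i⟩, 0), ?_⟩
      rw [pairMap_apply]
      exact add_zero _
  · rintro _ ⟨⟨q, v⟩, rfl⟩
    rw [pairMap_apply]
    exact Submodule.add_mem _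
      (Submodule.subset_span (Or.inr ⟨_, memB_iff.mpr fun i => (q i).2, rfl⟩))
      (Submodule.subset_span (Or.inl (memRT_iff.mpr fun i => (v i).2)))

/-- `RT^{k-1} ∩ B̃^k = {0}` and the sum `V^k = RT^{k-1} + B̃^k`
(the span of their union) has dimension `3 (k+1)³`. -/
theorem enhanced_rt_dimension (k : ℕ) (hk : 1 ≤ k) :
    (∀ v : Fin 3 → MvPolynomial (Fin 3) ℝ, memRT k v → memBt k v → v = 0) ∧
    Module.finrank ℝ
      ↥(Submodule.span ℝ {v : Fin 3 → MvPolynomial (Fin 3) ℝ | memRT k v ∨ memBt k v})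
      = 3 * (k + 1) ^ 3 := by
  constructor
  · rintro _ hv ⟨q, hq, rfl⟩
    rw [eq_zero_of_memB_of_memRT hk hq hv]
    exact map_zero curlCross
  · rw [span_eq_range_pairMap, LinearMap.finrank_range_of_inj (pairMap_injective hk),
      finrank_pairSpace hk]
end

section
/- In two dimensions, the subspaces RT^{k−1} and B̃^k of polynomial vector fields on ℝ² intersect only in the zero vector field, and the dimension of their sum V^k = RT^{k−1} + B̃^k equals 2(k+1)², the dimension of the space of vector fields whose components each have degree at most k in each variable. -/
/-!
The potentials `φ = x q₂ - y q₁` with `(q₁, q₂) ∈ B^k` are exactly the combinations of the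
`2 (k + 1)` monomials `x^(k+1) y^b` and `x^a y^(k+1)` with `a, b ≤ k`. If the curl of such a `φ`
lies in `RT^{k-1}`, then `φ = 0`: the coefficient of `x^(k+1) y^b` in `φ` reappears, up to the
factor `-(k + 1)`, as that of `x^k y^b` in `-∂_x φ`, whose `x`-degree must be at most `k - 1`;
the monomials `x^a y^(k+1)` are handled by `∂_y φ` in the same way
(`eq_zero_of_memRT2_curl2`). Hence the two spaces meet only in `0`, the map
`(p, q, φ) ↦ (p, q) + curl φ` is injective, and its range, the sum of the two spaces, has
dimension `2 k (k + 1) + 2 (k + 1) = 2 (k + 1)²`.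
-/

open MvPolynomial

/-- Membership in the Raviart–Thomas space `RT^{k-1}` on ℝ²: the `i`-th component has
degree at most `k` in the `i`-th variable and at most `k-1` in the other variable. -/
def memRT2 (k : ℕ) (v : Fin 2 → MvPolynomial (Fin 2) ℝ) : Prop :=
  ∀ i j : Fin 2, (v i).degreeOf j ≤ if i = j then k else k - 1

/-- Membership in the bubble space `B^k` on ℝ²: `q₁` is a combination of monomials
`x^{d₁} y^k` (`d₁ ≤ k`) and `q₂` of monomials `x^k y^{d₂}` (`d₂ ≤ k`). -/
def memB2 (k : ℕ) (q : Fin 2 → MvPolynomial (Fin 2) ℝ) : Prop :=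
  ∀ i : Fin 2, ∀ m ∈ (q i).support, (∀ j : Fin 2, m j ≤ k) ∧ (∀ j : Fin 2, j ≠ i → m j = k)

/-- Membership in `B̃^k`: the 2d curl `(∂_y φ, −∂_x φ)` of `φ = x q₂ − y q₁`
for some `(q₁, q₂) ∈ B^k`. -/
noncomputable def memBt2 (k : ℕ) (v : Fin 2 → MvPolynomial (Fin 2) ℝ) : Prop :=
  ∃ q : Fin 2 → MvPolynomial (Fin 2) ℝ, memB2 k q ∧
    v = ![pderiv 1 (X 0 * q 1 - X 1 * q 0), -(pderiv 0 (X 0 * q 1 - X 1 * q 0))]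

/-- The exponent vectors of the monomials `x^a y^b` with `(a, b) ∈ A`; the polynomials supported
on them form `restrictSupport ℝ (expSet2 A)`. -/
def expSet2 (A : Finset (ℕ × ℕ)) : Set (Fin 2 →₀ ℕ) := {m | (m 0, m 1) ∈ A}

/-- The exponents of the monomials `x^(k+1) y^b` and `x^a y^(k+1)` with `a, b ≤ k`. -/
def potExp2 (k : ℕ) : Finset (ℕ × ℕ) :=
  ({k + 1} ×ˢ Finset.range (k + 1)) ∪ (Finset.range (k + 1) ×ˢ {k + 1})

/-- The two-dimensional curl `φ ↦ (∂_y φ, -∂_x φ)` as a linear map. -/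
noncomputable def curl2 : MvPolynomial (Fin 2) ℝ →ₗ[ℝ] (Fin 2 → MvPolynomial (Fin 2) ℝ) :=
  LinearMap.pi ![(pderiv 1).toLinearMap, -(pderiv 0).toLinearMap]

lemma curl2_apply (φ : MvPolynomial (Fin 2) ℝ) :
    curl2 φ = ![pderiv 1 φ, -(pderiv 0 φ)] := by
  ext i : 1
  fin_cases i <;> simp [curl2]

lemma finrank_restrictSupport_expSet2 (A : Finset (ℕ × ℕ)) :
    Module.finrank ℝ (restrictSupport ℝ (expSet2 A)) = A.card := by
  rw [Module.finrank_eq_nat_card_basis (basisRestrictSupport ℝ (expSet2 A))]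
  let e : (Fin 2 →₀ ℕ) ≃ ℕ × ℕ := Finsupp.equivFunOnFinite.trans (finTwoArrowEquiv ℕ)
  have he : expSet2 A = e ⁻¹' (A : Set (ℕ × ℕ)) := by
    ext m; simp [expSet2, e]
  rw [he, Nat.card_preimage_of_injective e.injective (by simp [e.range_eq_univ])]
  simp

lemma finite_restrictSupport_expSet2 (A : Finset (ℕ × ℕ)) :
    Module.Finite ℝ (restrictSupport ℝ (expSet2 A)) := by
  let e : (Fin 2 →₀ ℕ) ≃ ℕ × ℕ := Finsupp.equivFunOnFinite.trans (finTwoArrowEquiv ℕ)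
  have he : expSet2 A = e ⁻¹' (A : Set (ℕ × ℕ)) := by
    ext m; simp [expSet2, e]
  have : Finite (expSet2 A) := by
    rw [he]; exact A.finite_toSet.preimage e.injective.injOn
  exact Module.Finite.of_basis (basisRestrictSupport ℝ (expSet2 A))

lemma card_potExp2 (k : ℕ) : (potExp2 k).card = 2 * (k + 1) := by
  rw [potExp2, Finset.card_union_of_disjoint]
  · simp; ring
  · rw [Finset.disjoint_left]
    rintro ⟨a, b⟩
    simp
    omega

/-- `RT^{k-1}` as a product of spaces spanned by monomials. The hypothesis `1 ≤ k` makes the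
truncated bound `≤ k - 1` agree with `< k`. -/
lemma memRT2_iff {k : ℕ} (hk : 1 ≤ k) (v : Fin 2 → MvPolynomial (Fin 2) ℝ) :
    memRT2 k v ↔
      v 0 ∈ restrictSupport ℝ (expSet2 (Finset.range (k + 1) ×ˢ Finset.range k)) ∧
      v 1 ∈ restrictSupport ℝ (expSet2 (Finset.range k ×ˢ Finset.range (k + 1))) := by
  simp only [memRT2, degreeOf_le_iff, Fin.forall_fin_two, mem_restrictSupport_iff, expSet2,
    Set.subset_def, Finset.mem_coe, Set.mem_ofPred_eq, Finset.mem_product, Finset.mem_range]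
  simp only [if_true, zero_ne_one, one_ne_zero, if_false, Nat.lt_succ_iff,
    Nat.lt_iff_le_pred hk]
  grind

/-- The potential `x q₂ - y q₁` of a bubble field only involves monomials `x^(k+1) y^b` and
`x^a y^(k+1)` with `a, b ≤ k`. -/
lemma potential_mem {k : ℕ} {q : Fin 2 → MvPolynomial (Fin 2) ℝ} (hq : memB2 k q) :
    X 0 * q 1 - X 1 * q 0 ∈ restrictSupport ℝ (expSet2 (potExp2 k)) := by
  refine Submodule.sub_mem _ ?_ ?_
  all_goals
    rw [mem_restrictSupport_iff, support_X_mul]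
    intro m hm
    obtain ⟨n, hn, rfl⟩ := Finset.mem_map.1 (Finset.mem_coe.1 hm)
  · have h := hq 1 n hn
    have h0 := h.2 0 (by decide)
    have h1 := h.1 1
    simp [expSet2, potExp2]
    omega
  · have h := hq 0 n hn
    have h0 := h.2 1 (by decide)
    have h1 := h.1 0
    simp [expSet2, potExp2]
    omega

/-- Conversely, the curl of each monomial `x^(k+1) y^b` or `x^a y^(k+1)` with `a, b ≤ k` lies
in `B̃^k`. -/
lemma memBt2_curl2_monomial {k : ℕ} {m : Fin 2 →₀ ℕ} (hm : m ∈ expSet2 (potExp2 k)) :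
    memBt2 k (curl2 (monomial m 1)) := by
  simp only [expSet2, potExp2, Set.mem_ofPred_eq, Finset.mem_union, Finset.mem_product,
    Finset.mem_singleton, Finset.mem_range] at hm
  rcases hm with ⟨h0, h1⟩ | ⟨h0, h1⟩
  · refine ⟨![0, monomial (m - Finsupp.single 0 1) 1], ?_, ?_⟩
    · intro i n hn
      fin_cases i
      · simp at hn
      · simp [support_monomial] at hn
        subst hn
        simp [Fin.forall_fin_two, h0]
        omega
    · have : (X 0 * monomial (m - Finsupp.single 0 1) 1 : MvPolynomial (Fin 2) ℝ)
          = monomial m 1 := by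
        rw [X, monomial_mul, add_tsub_cancel_of_le (by simp [h0]), one_mul]
      rw [curl2_apply]
      simp [this]
  · refine ⟨![-monomial (m - Finsupp.single 1 1) 1, 0], ?_, ?_⟩
    · intro i n hn
      fin_cases i
      · simp [support_monomial] at hn
        subst hn
        simp [Fin.forall_fin_two, h1]
        omega
      · simp at hn
    · have : (X 1 * monomial (m - Finsupp.single 1 1) 1 : MvPolynomial (Fin 2) ℝ)
          = monomial m 1 := by
        rw [X, monomial_mul, add_tsub_cancel_of_le (by simp [h1]), one_mul]
      rw [curl2_apply]
      simp [this]

/-- The key injectivity: a potential in the span of `x^(k+1) y^b`, `x^a y^(k+1)` whose curl lies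
in `RT^{k-1}` vanishes, because differentiating a monomial with respect to the variable of
exponent `k + 1` leaves that variable with exponent `k` in the component of the curl where
`RT^{k-1}` only allows `k - 1`. -/
lemma eq_zero_of_memRT2_curl2 {k : ℕ} (hk : 1 ≤ k) {φ : MvPolynomial (Fin 2) ℝ}
    (hφ : φ ∈ restrictSupport ℝ (expSet2 (potExp2 k))) (h : memRT2 k (curl2 φ)) : φ = 0 := by
  rw [memRT2_iff hk, curl2_apply] at h
  obtain ⟨hx, hy⟩ := h
  simp only [Matrix.cons_val_zero, Matrix.cons_val_one, Submodule.neg_mem_iff] at hx hy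
  rw [mem_restrictSupport_iff] at hφ hx hy
  rw [← support_eq_empty, Finset.eq_empty_iff_forall_notMem]
  intro m hm
  have hT := hφ hm
  simp only [expSet2, potExp2, Set.mem_ofPred_eq, Finset.mem_union, Finset.mem_product,
    Finset.mem_singleton, Finset.mem_range] at hT
  rw [mem_support_iff] at hm
  rcases hT with ⟨h0, h1⟩ | ⟨h0, h1⟩
  · have hle : Finsupp.single 0 1 ≤ m := by simp [h0]
    have hs : m - Finsupp.single 0 1 ∈ (pderiv 0 φ).support := by
      rw [mem_support_iff, coeff_pderiv, tsub_add_cancel_of_le hle]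
      exact mul_ne_zero hm (by positivity)
    have := hy hs
    simp [expSet2, h0] at this
  · have hle : Finsupp.single 1 1 ≤ m := by simp [h1]
    have hs : m - Finsupp.single 1 1 ∈ (pderiv 1 φ).support := by
      rw [mem_support_iff, coeff_pderiv, tsub_add_cancel_of_le hle]
      exact mul_ne_zero hm (by positivity)
    have := hx hs
    simp [expSet2, h1] at this

/-- in 2d, `RT^{k-1} ∩ B̃^k = {0}` and the sum `V^k = RT^{k-1} + B̃^k`
(the span of their union) has dimension `2 (k+1)²`. -/
theorem enhanced_rt_dimension_2d (k : ℕ) (hk : 1 ≤ k) :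
    (∀ v : Fin 2 → MvPolynomial (Fin 2) ℝ, memRT2 k v → memBt2 k v → v = 0) ∧
    Module.finrank ℝ
      ↥(Submodule.span ℝ {v : Fin 2 → MvPolynomial (Fin 2) ℝ | memRT2 k v ∨ memBt2 k v})
      = 2 * (k + 1) ^ 2 := by
  constructor
  · rintro v hv ⟨q, hq, rfl⟩
    rw [← curl2_apply] at hv ⊢
    rw [eq_zero_of_memRT2_curl2 hk (potential_mem hq) hv, map_zero]
  · let P := restrictSupport ℝ (expSet2 (Finset.range (k + 1) ×ˢ Finset.range k))
    let Q := restrictSupport ℝ (expSet2 (Finset.range k ×ˢ Finset.range (k + 1)))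
    let T := restrictSupport ℝ (expSet2 (potExp2 k))
    have : Module.Finite ℝ P := finite_restrictSupport_expSet2 _
    have : Module.Finite ℝ Q := finite_restrictSupport_expSet2 _
    have : Module.Finite ℝ T := finite_restrictSupport_expSet2 _
    -- The sum of the two spaces is parametrized by `(p, q, φ) ↦ (p, q) + curl φ`.
    let f : (P × Q) →ₗ[ℝ] (Fin 2 → MvPolynomial (Fin 2) ℝ) :=
      LinearMap.pi ![P.subtype ∘ₗ LinearMap.fst ℝ P Q, Q.subtype ∘ₗ LinearMap.snd ℝ P Q]
    have f0 (w : P × Q) : f w 0 = w.1 := rfl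
    have f1 (w : P × Q) : f w 1 = w.2 := rfl
    have hf (w : P × Q) : memRT2 k (f w) := (memRT2_iff hk _).2 ⟨w.1.2, w.2.2⟩
    let L : ((P × Q) × T) →ₗ[ℝ] (Fin 2 → MvPolynomial (Fin 2) ℝ) :=
      f.coprod (curl2 ∘ₗ T.subtype)
    have hL : Function.Injective L := by
      rw [← LinearMap.ker_eq_bot, LinearMap.ker_eq_bot']
      rintro ⟨w, φ⟩ h
      have h' : f w + curl2 (φ : MvPolynomial (Fin 2) ℝ) = 0 := h
      have hφ : (φ : MvPolynomial (Fin 2) ℝ) = 0 := by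
        refine eq_zero_of_memRT2_curl2 hk φ.2 ?_
        rw [← neg_eq_of_add_eq_zero_right h', ← map_neg]
        exact hf _
      rw [hφ, map_zero, add_zero] at h'
      have hp : (w.1 : MvPolynomial (Fin 2) ℝ) = 0 := by rw [← f0, h']; rfl
      have hq : (w.2 : MvPolynomial (Fin 2) ℝ) = 0 := by rw [← f1, h']; rfl
      exact Prod.ext (Prod.ext (Subtype.ext hp) (Subtype.ext hq)) (Subtype.ext hφ)
    have hrange : Submodule.span ℝ {v : Fin 2 → MvPolynomial (Fin 2) ℝ |
        memRT2 k v ∨ memBt2 k v} = LinearMap.range L := by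
      apply le_antisymm
      · rw [Submodule.span_le]
        rintro v (hv | ⟨q, hq, rfl⟩)
        · obtain ⟨h0, h1⟩ := (memRT2_iff hk v).1 hv
          refine ⟨((⟨v 0, h0⟩, ⟨v 1, h1⟩), 0), ?_⟩
          ext i : 1
          fin_cases i <;> simp [L, f]
        · refine ⟨(0, ⟨_, potential_mem hq⟩), ?_⟩
          rw [← curl2_apply]
          simp [L]
      · rintro _ ⟨⟨w, φ⟩, rfl⟩
        refine Submodule.add_mem _ (Submodule.subset_span (Or.inl (hf w))) ?_
        have hT : T ≤ (Submodule.span ℝ {v : Fin 2 → MvPolynomial (Fin 2) ℝ |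
            memRT2 k v ∨ memBt2 k v}).comap curl2 := by
          simp only [T]
          rw [restrictSupport_eq_span, Submodule.span_le]
          rintro _ ⟨m, hm, rfl⟩
          exact Submodule.subset_span (Or.inr (memBt2_curl2_monomial hm))
        exact hT φ.2
    rw [hrange, LinearMap.finrank_range_of_inj hL, Module.finrank_prod, Module.finrank_prod,
      finrank_restrictSupport_expSet2, finrank_restrictSupport_expSet2,
      finrank_restrictSupport_expSet2, card_potExp2]
    simp only [Finset.card_product, Finset.card_range]
    ring
end

section
/- Let q ∈ V^k and let w ∈ RT^{k−1} satisfy the Raviart–Thomas projection conditions relative to q: for each of the six faces ê of [−1,1]³, ∫_ê ((q−w)·n) p = 0 for all polynomials p of degree at most k−1 in each of the two face variables (n the outward unit normal), and ∫_{[−1,1]³} ((q−w)₁p₁ + (q−w)₂p₂ + (q−w)₃p₃) = 0 for all polynomials p₁, p₂, p₃ with deg_x p₁ ≤ k−2, deg_y p₁ ≤ k−1, deg_z p₁ ≤ k−1; deg_y p₂ ≤ k−2, deg_x p₂ ≤ k−1, deg_z p₂ ≤ k−1; deg_z p₃ ≤ k−2, deg_x p₃ ≤ k−1, deg_y p₃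 ≤ k−1. Then for every polynomial vector field u = (u₁,u₂,u₃) whose components have degree at most k−1 in each variable, the tensor-product Gauss–Lobatto quadrature of (q−w)·u vanishes: Σ_{i,j,l=0}^{k} λ_i λ_j λ_l (q−w)(ξ_i,ξ_j,ξ_l) · u(ξ_i,ξ_j,ξ_l) = 0. -/
/-!
The orthogonality holds componentwise. Fix `i` and let `d` be the `i`-th component of `q - w`. Its
degree is at most `k + 1` in `x_i` and at most `k` in the two other variables
(`memV.degreeOf_le`); nothing else about the bubble space matters.

By linearity let the test function be a monomial with exponents at most `k - 1`. In the two
variables other than `x_i` the integrand has degree at most `2 k - 1`, so the quadrature there can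
be replaced by integration, which turns `d` times the test function into a power of `x_i` times a
polynomial `F(x_i)` of degree at most `k + 1`. The face conditions say `F(±1) = 0` and the interior
conditions say that `F` is orthogonal to polynomials of degree at most `k - 2`. Exactness (degree at
most `k + 1 + k - 2 = 2 k - 1`) turns this into discrete orthogonality, and then `F` vanishes at all
Gauss–Lobatto nodes (`vanish_at_nodes`): it is a multiple of the nodal polynomial. Hence the
remaining quadrature in `x_i`, which need not be exact, is zero (`quad_moments_eq_zero`).

Integrals and quadrature sums are both handled through the monomial expansion of `d`, as
combinations of products of the one-dimensional quantities `mom n` and `quad ξ lam n`.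
-/

open MvPolynomial MeasureTheory

/-- Membership in the enhanced Raviart–Thomas space `V^k = RT^{k-1} + B̃^k`. -/
def memV (k : ℕ) (v : Fin 3 → MvPolynomial (Fin 3) ℝ) : Prop :=
  ∃ a q : Fin 3 → MvPolynomial (Fin 3) ℝ,
    memRT k a ∧ memB k q ∧ v = a + curl (cross posVF q)

/-- The point of the face `{x_i = s}` of `[-1,1]³` with face coordinates `(u, w)`. -/
def facePt (i : Fin 3) (s u w : ℝ) : Fin 3 → ℝ :=
  fun j => if j = i then s else if (if i = 0 then j = 1 else j = 0) then u else w

/-- Integral of a polynomial over the cube `[-1,1]³`. -/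
noncomputable def cubeInt (f : MvPolynomial (Fin 3) ℝ) : ℝ :=
  ∫ x in Set.Icc (-1:ℝ) 1, ∫ y in Set.Icc (-1:ℝ) 1, ∫ z in Set.Icc (-1:ℝ) 1,
    eval ![x, y, z] f

/-! ### Vanishing at the Gauss–Lobatto nodes -/

open Polynomial in
/-- A polynomial `F` of degree at most `k + 1` which vanishes at `±1` and is orthogonal, for the
discrete inner product of the rule, to all polynomials of degree at most `k - 2` vanishes at every
node: after subtracting a multiple of the nodal polynomial `N`, it has the form `(t² - 1) h` with
`deg h ≤ k - 2`, and testing `F` against `h` gives `∑ λⱼ (1 - ξⱼ²) h(ξⱼ)² = 0`, a sum of nonnegative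
terms. Exactness of the rule is not needed. -/
theorem vanish_at_nodes (k : ℕ) (ξ lam : Fin (k + 1) → ℝ)
    (hmono : StrictMono ξ) (hfirst : ξ 0 = -1) (hlast : ξ (Fin.last k) = 1)
    (hpos : ∀ i, 0 < lam i) (F : ℝ[X]) (hdeg : F.natDegree ≤ k + 1)
    (h1 : F.eval 1 = 0) (h2 : F.eval (-1) = 0)
    (horth : ∀ a, a + 2 ≤ k → ∑ i, lam i * (ξ i ^ a * F.eval (ξ i)) = 0) (i : Fin (k + 1)) :
    F.eval (ξ i) = 0 := by
  set N : ℝ[X] := ∏ j : Fin (k + 1), (Polynomial.X - Polynomial.C (ξ j)) with hN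
  have hNm : N.Monic := monic_prod_of_monic _ _ fun j _ => Polynomial.monic_X_sub_C _
  have hNd : N.natDegree = k + 1 := by
    rw [hN, natDegree_prod_of_monic _ _ fun j _ => Polynomial.monic_X_sub_C _]
    simp
  have hN0 : ∀ j, N.eval (ξ j) = 0 := fun j => by
    rw [hN, Polynomial.eval_prod]
    exact Finset.prod_eq_zero (Finset.mem_univ j) (by simp)
  set G : ℝ[X] := F - Polynomial.C (F.coeff (k + 1)) * N with hG
  have hGF : ∀ j, G.eval (ξ j) = F.eval (ξ j) := fun j => by simp [hG, hN0]
  have hGd : G.natDegree ≤ k := by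
    rw [natDegree_le_iff_coeff_eq_zero]
    intro n hn
    rcases (Nat.succ_le_of_lt hn).eq_or_lt with h | h
    · have : N.coeff (k + 1) = 1 := by rw [← hNd]; exact hNm
      rw [← h]
      simp [hG, this]
    · have e1 : F.coeff n = 0 := coeff_eq_zero_of_natDegree_lt (by lia)
      have e2 : N.coeff n = 0 := coeff_eq_zero_of_natDegree_lt (by lia)
      simp [hG, e1, e2]
  have hG1 : G.eval 1 = 0 := by rw [← hlast, hGF, hlast, h1]
  have hG2 : G.eval (-1) = 0 := by rw [← hfirst, hGF, hfirst, h2]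
  rw [← hGF]
  obtain ⟨g, hg⟩ := dvd_iff_isRoot.mpr (show G.IsRoot 1 from hG1)
  have hg2 : g.eval (-1) = 0 := by
    rw [hg] at hG2
    simp only [Polynomial.eval_mul, Polynomial.eval_sub, Polynomial.eval_X, Polynomial.eval_C] at hG2
    linarith
  obtain ⟨h, hh⟩ := dvd_iff_isRoot.mpr (show g.IsRoot (-1) from hg2)
  have hGh : G = (Polynomial.X - Polynomial.C 1) * (Polynomial.X - Polynomial.C (-1)) * h := by rw [hg, hh, mul_assoc]
  by_cases h0 : h = 0
  · simp [hGh, h0]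
  have hhd : h.natDegree + 2 ≤ k := by
    have hm : ((Polynomial.X - Polynomial.C 1) * (Polynomial.X - Polynomial.C (-1)) : ℝ[X]).Monic := (Polynomial.monic_X_sub_C _).mul (Polynomial.monic_X_sub_C _)
    rw [hGh, hm.natDegree_mul' h0, (Polynomial.monic_X_sub_C _).natDegree_mul (Polynomial.monic_X_sub_C _),
      natDegree_X_sub_C, natDegree_X_sub_C] at hGd
    lia
  have hsum : ∑ j, lam j * ((1 - ξ j ^ 2) * h.eval (ξ j) ^ 2) = 0 := by
    have e : ∑ j, lam j * (h.eval (ξ j) * F.eval (ξ j)) = 0 := by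
      simp_rw [Polynomial.eval_eq_sum_range (p := h), Finset.sum_mul, Finset.mul_sum]
      rw [Finset.sum_comm]
      refine Finset.sum_eq_zero fun a ha => ?_
      have := horth a (by simp at ha; lia)
      rw [← mul_zero (h.coeff a), ← this, Finset.mul_sum]
      exact Finset.sum_congr rfl fun j _ => by ring
    rw [← neg_eq_zero, ← e, ← Finset.sum_neg_distrib]
    refine Finset.sum_congr rfl fun j _ => ?_
    rw [← hGF, hGh]
    simp only [Polynomial.eval_mul, Polynomial.eval_sub, Polynomial.eval_X, Polynomial.eval_C]
    ring
  have hb : ∀ j, 0 ≤ 1 - ξ j ^ 2 := fun j => by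
    have l : -1 ≤ ξ j := hfirst ▸ hmono.monotone (Fin.zero_le j)
    have r : ξ j ≤ 1 := hlast ▸ hmono.monotone (Fin.le_last j)
    nlinarith
  have hz := (Finset.sum_eq_zero_iff_of_nonneg fun j _ =>
    mul_nonneg (hpos j).le (mul_nonneg (hb j) (sq_nonneg _))).mp hsum i (Finset.mem_univ i)
  have hz' : (1 - ξ i ^ 2) * h.eval (ξ i) = 0 := by
    have := (mul_eq_zero.mp hz).resolve_left (hpos i).ne'
    rcases mul_eq_zero.mp this with e | e
    · rw [e, zero_mul]
    · rw [pow_eq_zero_iff two_ne_zero |>.mp e, mul_zero]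
  rw [hGh]
  simp only [Polynomial.eval_mul, Polynomial.eval_sub, Polynomial.eval_X, Polynomial.eval_C]
  linarith


/-! ### Integrals of monomial sums -/

theorem integral_sum_mul (ι : Type*) (S : Finset ι) (c : ι → ℝ) (f : ι → ℝ → ℝ)
    (hf : ∀ m, Continuous (f m)) :
    ∫ t in Set.Icc (-1:ℝ) 1, ∑ m ∈ S, c m * f m t
      = ∑ m ∈ S, c m * ∫ t in Set.Icc (-1:ℝ) 1, f m t := by
  rw [integral_finsetSum]
  · simp_rw [integral_const_mul]
  · intro m _
    exact ((continuous_const.mul (hf m)).continuousOn).integrableOn_Icc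

/-- The moment `∫ tⁿ dt` over `[-1,1]`. -/
noncomputable def mom (n : ℕ) : ℝ := ∫ t in Set.Icc (-1:ℝ) 1, t ^ n

theorem integral2 (ι : Type*) (S : Finset ι) (c : ι → ℝ) (α β : ι → ℕ) :
    ∫ x in Set.Icc (-1:ℝ) 1, ∫ y in Set.Icc (-1:ℝ) 1, ∑ m ∈ S, c m * (x ^ α m * y ^ β m)
      = ∑ m ∈ S, c m * (mom (α m) * mom (β m)) := by
  simp_rw [← mul_assoc]
  simp_rw [fun x : ℝ => integral_sum_mul ι S (fun m => c m * x ^ α m) (fun m y => y ^ β m)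
    (fun m => by fun_prop)]
  simp_rw [mul_right_comm _ (_ ^ _)]
  rw [integral_sum_mul ι S _ (fun m x => x ^ α m) (fun m => by fun_prop)]
  exact Finset.sum_congr rfl fun m _ => by simp only [mom]; ring

theorem integral3 (ι : Type*) (S : Finset ι) (c : ι → ℝ) (α β γ : ι → ℕ) :
    ∫ x in Set.Icc (-1:ℝ) 1, ∫ y in Set.Icc (-1:ℝ) 1, ∫ z in Set.Icc (-1:ℝ) 1,
        ∑ m ∈ S, c m * (x ^ α m * y ^ β m * z ^ γ m)
      = ∑ m ∈ S, c m * (mom (α m) * mom (β m) * mom (γ m)) := by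
  simp_rw [fun x : ℝ => fun m => show ∀ y z : ℝ, c m * (x ^ α m * y ^ β m * z ^ γ m)
    = (c m * x ^ α m) * (y ^ β m * z ^ γ m) from fun y z => by ring, integral2]
  simp_rw [mul_right_comm _ (_ ^ _)]
  rw [integral_sum_mul ι S _ (fun m x => x ^ α m) (fun m => by fun_prop)]
  exact Finset.sum_congr rfl fun m _ => by simp only [mom]; ring

/-! ### Degrees in the enhanced Raviart–Thomas space -/

theorem degreeOf_pderiv_le (i j : Fin 3) (f : MvPolynomial (Fin 3) ℝ) :
    (pderiv i f).degreeOf j ≤ if i = j then f.degreeOf j - 1 else f.degreeOf j := by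
  conv_lhs => rw [f.as_sum, map_sum]
  refine (degreeOf_sum_le _ _ _).trans (Finset.sup_le fun m hm => ?_)
  have hmj := le_degreeOf_of_mem_support j hm
  rw [pderiv_monomial]
  by_cases h0 : coeff m f * (m i : ℝ) = 0
  · simp [h0]
  rw [degreeOf_monomial_eq _ _ h0]
  simp only [Finsupp.coe_tsub, Pi.sub_apply, Finsupp.single_apply]
  split_ifs <;> lia

theorem degreeOf_posVF_mul_le (i t : Fin 3) (k : ℕ) (f : MvPolynomial (Fin 3) ℝ)
    (hf : f.degreeOf t ≤ k) : (posVF i * f).degreeOf t ≤ if i = t then k + 1 else k := by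
  refine (degreeOf_mul_le _ _ _).trans ?_
  rw [posVF, degreeOf_X]
  by_cases h : i = t
  · rw [if_pos h, if_pos h.symm]
    lia
  · rw [if_neg h, if_neg (Ne.symm h)]
    lia

theorem degreeOf_sub_le' (t : Fin 3) (n : ℕ) (f g : MvPolynomial (Fin 3) ℝ)
    (hf : f.degreeOf t ≤ n) (hg : g.degreeOf t ≤ n) : (f - g).degreeOf t ≤ n := by
  rw [degreeOf_le_iff] at *
  intro m hm
  rcases Finset.mem_union.mp (support_sub (Fin 3) f g hm) with h | h
  exacts [hf m h, hg m h]

/-- The only property of `V^k` the argument uses: the `i`-th component of a field in `V^k` has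
degree at most `k + 1` in the `i`-th variable and at most `k` in the two others. In the curl, the
variable which gains a degree from the factor `posVF` loses it again unless it is the `i`-th. -/
theorem memV.degreeOf_le {k : ℕ} {v : Fin 3 → MvPolynomial (Fin 3) ℝ} (hv : memV k v)
    (i t : Fin 3) : (v i).degreeOf t ≤ if i = t then k + 1 else k := by
  obtain ⟨a, b, ha, hb, rfl⟩ := hv
  have hbt : ∀ i t, (b i).degreeOf t ≤ k := fun i t =>
    degreeOf_le_iff.mpr fun m hm => (hb i m hm).1 t
  rw [Pi.add_apply]
  refine (degreeOf_add_le _ _ _).trans (max_le ?_ ?_)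
  · have := ha i t
    split_ifs at * <;> lia
  have hx : ∀ i j t, (posVF i * b j).degreeOf t ≤ if i = t then k + 1 else k :=
    fun i j t => degreeOf_posVF_mul_le i t k _ (hbt j t)
  have hc : ∀ i j t, (posVF i * b j - posVF j * b i).degreeOf t
      ≤ if i = t ∨ j = t then k + 1 else k := fun i j t => by
    apply degreeOf_sub_le'
    · refine (hx i j t).trans ?_
      split_ifs <;> simp_all
    · refine (hx j i t).trans ?_
      split_ifs <;> simp_all
  have hp : ∀ s i j t, (pderiv s (posVF i * b j - posVF j * b i)).degreeOf t
      ≤ if (i = t ∨ j = t) ∧ s ≠ t then k + 1 else k := fun s i j t => by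
    have h1 := degreeOf_pderiv_le s t (posVF i * b j - posVF j * b i)
    have h2 := hc i j t
    refine h1.trans ?_
    split_ifs at * <;> simp_all <;> lia
  have key : ∀ s s' i j i' j', ∀ n : ℕ, ((i = t ∨ j = t) ∧ s ≠ t → k + 1 ≤ n) →
      ((i' = t ∨ j' = t) ∧ s' ≠ t → k + 1 ≤ n) → k ≤ n →
      (pderiv s (posVF i * b j - posVF j * b i)
        - pderiv s' (posVF i' * b j' - posVF j' * b i')).degreeOf t ≤ n := by
    intro s s' i j i' j' n h1 h2 h3
    apply degreeOf_sub_le'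
    · refine (hp s i j t).trans ?_
      split_ifs with h
      exacts [h1 h, h3]
    · refine (hp s' i' j' t).trans ?_
      split_ifs with h
      exacts [h2 h, h3]
  fin_cases i
  · refine key 1 2 0 1 2 0 _ ?_ ?_ ?_ <;> fin_cases t <;> simp
  · refine key 2 0 1 2 0 1 _ ?_ ?_ ?_ <;> fin_cases t <;> simp
  · refine key 0 1 2 0 1 2 _ ?_ ?_ ?_ <;> fin_cases t <;> simp

/-! ### Reduction of the quadrature to one variable -/

/-- The quadrature rule applied to `tⁿ`. -/
noncomputable def quad {k : ℕ} (ξ lam : Fin (k + 1) → ℝ) (n : ℕ) : ℝ :=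
  ∑ i, lam i * ξ i ^ n

theorem quad_eq_mom {k : ℕ} {ξ lam : Fin (k + 1) → ℝ}
    (hexact : ∀ p : Polynomial ℝ, p.natDegree ≤ 2 * k - 1 →
      ∑ i, lam i * p.eval (ξ i) = ∫ t in Set.Icc (-1:ℝ) 1, p.eval t)
    {n : ℕ} (hn : n ≤ 2 * k - 1) : quad ξ lam n = mom n := by
  simpa [quad, mom] using hexact (Polynomial.X ^ n) (by simpa using hn)

/-- The argument reduced to one dimension. The data `r, α, β, γ` stand for a polynomial
`∑ r m * x ^ α m * y ^ β m * z ^ γ m`, the exponents `β`, `γ` already including those of the test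
monomial. Integrating in `y` and `z` leaves the polynomial `F` in `x` to which `vanish_at_nodes`
applies. -/
theorem quad_moments_eq_zero (k : ℕ) (hk : 1 ≤ k)
    (ξ lam : Fin (k + 1) → ℝ)
    (hmono : StrictMono ξ) (hfirst : ξ 0 = -1) (hlast : ξ (Fin.last k) = 1)
    (hpos : ∀ i, 0 < lam i)
    (hexact : ∀ p : Polynomial ℝ, p.natDegree ≤ 2 * k - 1 →
      ∑ i, lam i * p.eval (ξ i) = ∫ t in Set.Icc (-1:ℝ) 1, p.eval t)
    (ι : Type*) (S : Finset ι) (r : ι → ℝ) (α β γ : ι → ℕ)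
    (hα : ∀ m ∈ S, α m ≤ k + 1) (hβ : ∀ m ∈ S, β m ≤ 2 * k - 1)
    (hγ : ∀ m ∈ S, γ m ≤ 2 * k - 1)
    (hface : ∀ s : ℝ, s = 1 ∨ s = -1 →
      ∑ m ∈ S, r m * s ^ α m * (mom (β m) * mom (γ m)) = 0)
    (hint : ∀ a, a + 2 ≤ k →
      ∑ m ∈ S, r m * (mom (α m + a) * (mom (β m) * mom (γ m))) = 0) (a : ℕ) :
    ∑ m ∈ S, r m * (quad ξ lam (α m + a) * (quad ξ lam (β m) * quad ξ lam (γ m))) = 0 := by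
  set F : Polynomial ℝ := ∑ m ∈ S,
    Polynomial.C (r m * (mom (β m) * mom (γ m))) * Polynomial.X ^ α m with hF
  have hFe : ∀ s : ℝ, F.eval s = ∑ m ∈ S, r m * s ^ α m * (mom (β m) * mom (γ m)) := fun s => by
    simp only [hF, Polynomial.eval_finsetSum, Polynomial.eval_mul, Polynomial.eval_C,
      Polynomial.eval_pow, Polynomial.eval_X]
    exact Finset.sum_congr rfl fun m _ => by ring
  have hquad : ∀ a, ∑ j, lam j * (ξ j ^ a * F.eval (ξ j))
      = ∑ m ∈ S, r m * (quad ξ lam (α m + a) * (mom (β m) * mom (γ m))) := fun a => by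
    simp_rw [hFe, quad, Finset.sum_mul, Finset.mul_sum]
    rw [Finset.sum_comm]
    exact Finset.sum_congr rfl fun m _ => Finset.sum_congr rfl fun j _ => by ring
  have hz := vanish_at_nodes k ξ lam hmono hfirst hlast hpos F
    (Polynomial.natDegree_sum_le_of_forall_le _ _ fun m hm =>
      (Polynomial.natDegree_C_mul_X_pow_le _ _).trans (hα m hm))
    (by rw [hFe]; exact hface 1 (Or.inl rfl)) (by rw [hFe]; exact hface (-1) (Or.inr rfl))
    (fun a ha => by
      rw [hquad, ← hint a ha]
      refine Finset.sum_congr rfl fun m hm => ?_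
      have := hα m hm
      rw [quad_eq_mom hexact (by lia)])
  rw [Finset.sum_congr rfl fun m hm => by
    rw [quad_eq_mom hexact (hβ m hm), quad_eq_mom hexact (hγ m hm)], ← hquad]
  exact Finset.sum_eq_zero fun j _ => by rw [hz, mul_zero, mul_zero]

/-- The tensor-product rule applied to `d * u`, expanded in monomials. -/
theorem sum_quad_eq {k : ℕ} (ξ lam : Fin (k + 1) → ℝ) (d u : MvPolynomial (Fin 3) ℝ) :
    ∑ idx : Fin 3 → Fin (k + 1), (∏ j, lam (idx j)) *
      (eval (fun j => ξ (idx j)) d * eval (fun j => ξ (idx j)) u)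
    = ∑ n ∈ u.support, coeff n u * ∑ m ∈ d.support, coeff m d *
        ∏ t, quad ξ lam (m t + n t) := by
  simp_rw [quad, Fintype.prod_sum, eval_eq', Finset.sum_mul_sum, Finset.mul_sum]
  rw [Finset.sum_comm]
  rw [Finset.sum_congr rfl fun m _ => Finset.sum_comm]
  rw [Finset.sum_comm]
  refine Finset.sum_congr rfl fun n _ => Finset.sum_congr rfl fun m _ =>
    Finset.sum_congr rfl fun idx _ => ?_
  simp_rw [pow_add, Finset.prod_mul_distrib]
  ring

/-! ### Componentwise orthogonality -/

/-- The orthogonality relation for one component `d` of `q - w`, from the projection conditions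
that involve this component only. -/
theorem component_eq_zero (k : ℕ) (hk : 1 ≤ k)
    (ξ lam : Fin (k + 1) → ℝ)
    (hmono : StrictMono ξ) (hfirst : ξ 0 = -1) (hlast : ξ (Fin.last k) = 1)
    (hpos : ∀ i, 0 < lam i)
    (hexact : ∀ p : Polynomial ℝ, p.natDegree ≤ 2 * k - 1 →
      ∑ i, lam i * p.eval (ξ i) = ∫ t in Set.Icc (-1:ℝ) 1, p.eval t)
    (i : Fin 3) (d u : MvPolynomial (Fin 3) ℝ)
    (hd : ∀ t, d.degreeOf t ≤ if i = t then k + 1 else k)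
    (hu : ∀ t, u.degreeOf t ≤ k - 1)
    (hface : ∀ s : ℝ, s = 1 ∨ s = -1 →
      ∀ p : MvPolynomial (Fin 3) ℝ, p.degreeOf i = 0 →
      (∀ j : Fin 3, p.degreeOf j ≤ k - 1) →
      (∫ u in Set.Icc (-1:ℝ) 1, ∫ w' in Set.Icc (-1:ℝ) 1,
        s * eval (facePt i s u w') d * eval (facePt i s u w') p) = 0)
    (hint : ∀ n : Fin 3 →₀ ℕ, n i + 2 ≤ k → (∀ j, j ≠ i → n j + 1 ≤ k) →
      cubeInt (d * monomial n 1) = 0) :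
    ∑ idx : Fin 3 → Fin (k + 1), (∏ j, lam (idx j)) *
      (eval (fun j => ξ (idx j)) d * eval (fun j => ξ (idx j)) u) = 0 := by
  rw [sum_quad_eq]
  refine Finset.sum_eq_zero fun n hn => mul_eq_zero_of_right _ ?_
  have hnt : ∀ t, n t + 1 ≤ k := fun t => by
    have := (le_degreeOf_of_mem_support t hn).trans (hu t)
    lia
  have hmt : ∀ t, ∀ m ∈ d.support, m t ≤ if i = t then k + 1 else k := fun t m hm =>
    (le_degreeOf_of_mem_support t hm).trans (hd t)
  have hF : ∀ s : ℝ, s = 1 ∨ s = -1 → ∫ u in Set.Icc (-1:ℝ) 1, ∫ w' in Set.Icc (-1:ℝ) 1,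
      s * eval (facePt i s u w') d * eval (facePt i s u w') (monomial (n.erase i) 1) = 0 :=
    fun s hs => hface s hs _ (by rw [degreeOf_monomial_eq _ _ one_ne_zero]; simp) fun j => by
      rw [degreeOf_monomial_eq _ _ one_ne_zero, Finsupp.erase_apply]
      have := hnt j
      split_ifs <;> lia
  -- Monomial expansion of the face conditions; the variable `i` is dropped from the test monomial.
  have hF' : ∀ s : ℝ, s = 1 ∨ s = -1 → ∫ u in Set.Icc (-1:ℝ) 1, ∫ w' in Set.Icc (-1:ℝ) 1,
      ∑ m ∈ d.support, s * coeff m d * (∏ t, facePt i s u w' t ^ (m t) *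
        facePt i s u w' t ^ (n.erase i t)) = 0 := fun s hs => by
    rw [← hF s hs]
    simp_rw [eval_monomial, Finsupp.prod_fintype _ _ fun t => pow_zero _, eval_eq',
      Finset.prod_mul_distrib, Finset.mul_sum, Finset.sum_mul, one_mul, mul_assoc]
  have hI : ∀ n' : Fin 3 →₀ ℕ, n' i + 2 ≤ k → (∀ j, j ≠ i → n' j + 1 ≤ k) →
      ∑ m ∈ d.support, coeff m d *
        (mom (m 0 + n' 0) * mom (m 1 + n' 1) * mom (m 2 + n' 2)) = 0 := fun n' h1 h2 => by
    have e : ∀ x y z : ℝ, eval ![x, y, z] (d * monomial n' 1) = ∑ m ∈ d.support,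
        coeff m d * (x ^ (m 0 + n' 0) * y ^ (m 1 + n' 1) * z ^ (m 2 + n' 2)) := fun x y z => by
      rw [eval_mul, eval_monomial, Finsupp.prod_fintype _ _ fun t => pow_zero _, eval_eq',
        Finset.sum_mul]
      refine Finset.sum_congr rfl fun m _ => ?_
      simp [Fin.prod_univ_three]
      ring
    rw [← hint n' h1 h2, cubeInt, ← integral3]
    simp_rw [e]
  -- The exponent of the test monomial in the variable `i` is free, the two others are those of `n`.
  have hI' := fun a (ha : a + 2 ≤ k) => hI (n.update i a)
    (by simpa using ha) (fun j hj => by simpa [hj] using hnt j)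
  have cancel : ∀ s x : ℝ, s = 1 ∨ s = -1 → s * x = 0 → x = 0 := by
    rintro s x (rfl | rfl) h <;> linarith
  clear hF hI hface hint
  have hm0 := hmt 0
  have hm1 := hmt 1
  have hm2 := hmt 2
  have hn0 := hnt 0
  have hn1 := hnt 1
  have hn2 := hnt 2
  simp_rw [Fin.prod_univ_three] at *
  fin_cases i
  · simp [facePt, -forall_eq_or_imp, -mem_support_iff] at hF' hI' hm0 hm1 hm2
    have := quad_moments_eq_zero k hk ξ lam hmono hfirst hlast hpos hexact _ d.support
      (fun m => coeff m d) (fun m => m 0) (fun m => m 1 + n 1) (fun m => m 2 + n 2)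
      hm0 (fun m hm => by have := hm1 m hm; lia) (fun m hm => by have := hm2 m hm; lia)
      (fun s hs => by
        refine cancel s _ hs ?_
        simp_rw [Finset.mul_sum, ← mul_assoc s]
        rw [← integral2, ← hF' s hs]
        refine integral_congr_ae (.of_forall fun x => integral_congr_ae (.of_forall fun y =>
          Finset.sum_congr rfl fun m _ => ?_))
        ring)
      (fun a ha => by
        rw [← hI' a ha]
        exact Finset.sum_congr rfl fun m _ => by ring) (n 0)
    rw [← this]
    exact Finset.sum_congr rfl fun m _ => by ring
  · simp [facePt, -forall_eq_or_imp, -mem_support_iff] at hF' hI' hm0 hm1 hm2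
    have := quad_moments_eq_zero k hk ξ lam hmono hfirst hlast hpos hexact _ d.support
      (fun m => coeff m d) (fun m => m 1) (fun m => m 0 + n 0) (fun m => m 2 + n 2)
      hm1 (fun m hm => by have := hm0 m hm; lia) (fun m hm => by have := hm2 m hm; lia)
      (fun s hs => by
        refine cancel s _ hs ?_
        simp_rw [Finset.mul_sum, ← mul_assoc s]
        rw [← integral2, ← hF' s hs]
        refine integral_congr_ae (.of_forall fun x => integral_congr_ae (.of_forall fun y =>
          Finset.sum_congr rfl fun m _ => ?_))
        ring)
      (fun a ha => by
        rw [← hI' a ha]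
        exact Finset.sum_congr rfl fun m _ => by ring) (n 1)
    rw [← this]
    exact Finset.sum_congr rfl fun m _ => by ring
  · simp [facePt, -forall_eq_or_imp, -mem_support_iff] at hF' hI' hm0 hm1 hm2
    have := quad_moments_eq_zero k hk ξ lam hmono hfirst hlast hpos hexact _ d.support
      (fun m => coeff m d) (fun m => m 2) (fun m => m 0 + n 0) (fun m => m 1 + n 1)
      hm2 (fun m hm => by have := hm0 m hm; lia) (fun m hm => by have := hm1 m hm; lia)
      (fun s hs => by
        refine cancel s _ hs ?_
        simp_rw [Finset.mul_sum, ← mul_assoc s]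
        rw [← integral2, ← hF' s hs]
        refine integral_congr_ae (.of_forall fun x => integral_congr_ae (.of_forall fun y =>
          Finset.sum_congr rfl fun m _ => ?_))
        ring)
      (fun a ha => by
        rw [← hI' a ha]
        exact Finset.sum_congr rfl fun m _ => by ring) (n 2)
    rw [← this]
    exact Finset.sum_congr rfl fun m _ => by ring

/-- if `q ∈ V^k` and `w ∈ RT^{k-1}` satisfies the Raviart–Thomas projection
conditions relative to `q`, then the tensor-product Gauss–Lobatto quadrature of
`(q - w)·u` vanishes for every `u` with components in `Q^{k-1}`. -/
theorem quadrature_orthogonality (k : ℕ) (hk : 1 ≤ k)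
    (ξ lam : Fin (k + 1) → ℝ)
    (hmono : StrictMono ξ) (hfirst : ξ 0 = -1) (hlast : ξ (Fin.last k) = 1)
    (hpos : ∀ i, 0 < lam i)
    (hexact : ∀ p : Polynomial ℝ, p.natDegree ≤ 2 * k - 1 →
      ∑ i, lam i * p.eval (ξ i) = ∫ t in Set.Icc (-1:ℝ) 1, p.eval t)
    (q w : Fin 3 → MvPolynomial (Fin 3) ℝ)
    (hq : memV k q) (hw : memRT k w)
    (hface : ∀ i : Fin 3, ∀ s : ℝ, s = 1 ∨ s = -1 →
      ∀ p : MvPolynomial (Fin 3) ℝ, p.degreeOf i = 0 →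
      (∀ j : Fin 3, p.degreeOf j ≤ k - 1) →
      (∫ u in Set.Icc (-1:ℝ) 1, ∫ w' in Set.Icc (-1:ℝ) 1,
        s * eval (facePt i s u w') ((q - w) i) * eval (facePt i s u w') p) = 0)
    (hint : ∀ p : Fin 3 → MvPolynomial (Fin 3) ℝ,
      (∀ i : Fin 3, ∀ m ∈ (p i).support,
        m i + 2 ≤ k ∧ ∀ j : Fin 3, j ≠ i → m j + 1 ≤ k) →
      cubeInt (∑ i, (q - w) i * p i) = 0)
    (u : Fin 3 → MvPolynomial (Fin 3) ℝ)
    (hu : ∀ i j : Fin 3, (u i).degreeOf j ≤ k - 1) :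
    ∑ idx : Fin 3 → Fin (k + 1), (∏ j, lam (idx j)) *
      (∑ i, eval (fun j => ξ (idx j)) ((q - w) i) * eval (fun j => ξ (idx j)) (u i))
      = 0 := by
  simp_rw [Finset.mul_sum]
  rw [Finset.sum_comm]
  refine Finset.sum_eq_zero fun i _ => ?_
  refine component_eq_zero k hk ξ lam hmono hfirst hlast hpos hexact i ((q - w) i) (u i)
    (fun t => ?_) (hu i) (hface i) fun n h1 h2 => ?_
  · refine degreeOf_sub_le' _ _ _ _ (hq.degreeOf_le i t) ((hw i t).trans ?_)
    split_ifs <;> lia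
  -- Interior test fields with a single nonzero component isolate the component `i`.
  · have := hint (Pi.single i (monomial n 1)) fun i' m hm => by
      by_cases h : i' = i
      · subst h
        rw [Pi.single_eq_same] at hm
        obtain rfl := Finset.mem_singleton.mp (support_monomial_subset hm)
        exact ⟨h1, h2⟩
      · simp [Pi.single_eq_of_ne h] at hm
    rwa [Finset.sum_eq_single i (fun j _ hj => by rw [Pi.single_eq_of_ne hj, mul_zero])
      (by simp), Pi.single_eq_same] at this
end

section
/- Every element v = (v₁,v₂,v₃) of the enhanced Raviart–Thomas space V^k satisfies the degree structure: deg_x v₁ ≤ k+1, deg_y v₁ ≤ k, deg_z v₁ ≤ k; deg_y v₂ ≤ k+1, deg_x v₂ ≤ k, deg_z v₂ ≤ k; deg_z v₃ ≤ k+1, deg_x v₃ ≤ k, deg_y v₃ ≤ k. Consequently, on each face of the cube [−1,1]³ the normal component of v is a polynomial of degree at most k in each of the two face variables. -/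
/-!
The product rule turns `curl (r × q)` into first-order expressions in `q`: for `{i, j, l} = {0, 1, 2}`,
the `i`-th component is
`Xᵢ * (∂ⱼ qⱼ + ∂ₗ qₗ) - 2 qᵢ - Xⱼ ∂ⱼ qᵢ - Xₗ ∂ₗ qᵢ` (`curl_cross_zero`, `curl_cross_one`,
`curl_cross_two`). Differentiation does not raise any degree, and each operator `Xⱼ ∂ⱼ` preserves
all the degree bounds, so the only factor that can push a degree above `k` is the leading `Xᵢ`, which
raises the degree in the variable `i` by one and leaves the others alone (`degreeOf_bubble_le`). The
Raviart–Thomas summand obeys stronger bounds. On a face the variable `i` is replaced by a constant,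
which cannot raise the degree in any variable and removes the variable `i` altogether.
-/

open MvPolynomial

lemma degreeOf_pderiv_le_s11 (i j : Fin 3) (p : MvPolynomial (Fin 3) ℝ) :
    (pderiv i p).degreeOf j ≤ p.degreeOf j := by
  rw [degreeOf_le_iff]
  intro m hm
  rw [mem_support_iff, coeff_pderiv] at hm
  have := le_degreeOf_of_mem_support j (mem_support_iff.2 (left_ne_zero_of_mul hm))
  simp only [Finsupp.add_apply] at this
  omega

/-- The Euler-type operator `Xᵢ ∂ᵢ` scales each monomial, hence raises no partial degree. -/
lemma degreeOf_X_mul_pderiv_self_le (i j : Fin 3) (p : MvPolynomial (Fin 3) ℝ) :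
    (X i * pderiv i p).degreeOf j ≤ p.degreeOf j := by
  rw [degreeOf_le_iff]
  intro m hm
  rw [mem_support_iff, coeff_X_mul'] at hm
  split_ifs at hm with hi
  · rw [coeff_pderiv] at hm
    have h1 : m - Finsupp.single i 1 + Finsupp.single i 1 = m := by
      apply tsub_add_cancel_of_le
      rw [Finsupp.single_le_iff]
      exact Nat.one_le_iff_ne_zero.2 (Finsupp.mem_support_iff.1 hi)
    rw [h1] at hm
    exact le_degreeOf_of_mem_support j (mem_support_iff.2 (left_ne_zero_of_mul hm))
  · exact absurd rfl hm

lemma curl_cross_zero (q : Fin 3 → MvPolynomial (Fin 3) ℝ) :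
    curl (cross posVF q) 0 = X 0 * (pderiv 1 (q 1) + pderiv 2 (q 2)) -
      C 2 * q 0 - X 1 * pderiv 1 (q 0) - X 2 * pderiv 2 (q 0) := by
  rw [show (C 2 : MvPolynomial (Fin 3) ℝ) = 2 from map_ofNat C 2]
  simp [curl, cross, posVF, pderiv_X]
  ring

lemma curl_cross_one (q : Fin 3 → MvPolynomial (Fin 3) ℝ) :
    curl (cross posVF q) 1 = X 1 * (pderiv 2 (q 2) + pderiv 0 (q 0)) -
      C 2 * q 1 - X 2 * pderiv 2 (q 1) - X 0 * pderiv 0 (q 1) := by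
  rw [show (C 2 : MvPolynomial (Fin 3) ℝ) = 2 from map_ofNat C 2]
  simp [curl, cross, posVF, pderiv_X]
  ring

lemma curl_cross_two (q : Fin 3 → MvPolynomial (Fin 3) ℝ) :
    curl (cross posVF q) 2 = X 2 * (pderiv 0 (q 0) + pderiv 1 (q 1)) -
      C 2 * q 2 - X 0 * pderiv 0 (q 2) - X 1 * pderiv 1 (q 2) := by
  rw [show (C 2 : MvPolynomial (Fin 3) ℝ) = 2 from map_ofNat C 2]
  simp [curl, cross, posVF, pderiv_X]
  ring

/-- Degree bounds for the expression shared by the three components of `curl (r × q)`. -/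
lemma degreeOf_bubble_le {k : ℕ} {q : Fin 3 → MvPolynomial (Fin 3) ℝ}
    (hq : ∀ i n, (q i).degreeOf n ≤ k) (i j l n : Fin 3) :
    (X i * (pderiv j (q j) + pderiv l (q l)) - C 2 * q i -
      X j * pderiv j (q i) - X l * pderiv l (q i)).degreeOf n ≤ if i = n then k + 1 else k := by
  have h0 := (degreeOf_add_le n (pderiv j (q j)) (pderiv l (q l))).trans
    (max_le ((degreeOf_pderiv_le_s11 j n _).trans (hq j n)) ((degreeOf_pderiv_le_s11 l n _).trans (hq l n)))
  have h1 := degreeOf_mul_le n (X i) (pderiv j (q j) + pderiv l (q l))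
  rw [degreeOf_X] at h1
  have h2 := (degreeOf_C_mul_le (q i) n 2).trans (hq i n)
  have h3 := (degreeOf_X_mul_pderiv_self_le j n (q i)).trans (hq i n)
  have h4 := (degreeOf_X_mul_pderiv_self_le l n (q i)).trans (hq i n)
  refine (degreeOf_sub_le _ _ _).trans (max_le ((degreeOf_sub_le _ _ _).trans
    (max_le ((degreeOf_sub_le _ _ _).trans (max_le ?_ ?_)) ?_)) ?_) <;>
    split_ifs at h1 ⊢ <;> grind

/-- The degree structure of `V^k`; of the definition of `B^k` only `deg ≤ k` in each variable
matters. -/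
lemma degreeOf_le_of_memV {k : ℕ} {v : Fin 3 → MvPolynomial (Fin 3) ℝ} (hv : memV k v)
    (i n : Fin 3) : (v i).degreeOf n ≤ if i = n then k + 1 else k := by
  obtain ⟨a, q, ha, hq, rfl⟩ := hv
  have hq' : ∀ i n, (q i).degreeOf n ≤ k := fun i n =>
    degreeOf_le_iff.2 fun m hm => (hq i m hm).1 n
  refine (degreeOf_add_le n (a i) (curl (cross posVF q) i)).trans (max_le ?_ ?_)
  · have := ha i n
    split_ifs at this ⊢ <;> omega
  · fin_cases i
    · exact (congrArg (degreeOf n) (curl_cross_zero q)).trans_le (degreeOf_bubble_le hq' 0 1 2 n)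
    · exact (congrArg (degreeOf n) (curl_cross_one q)).trans_le (degreeOf_bubble_le hq' 1 2 0 n)
    · exact (congrArg (degreeOf n) (curl_cross_two q)).trans_le (degreeOf_bubble_le hq' 2 0 1 n)

/-- Restricting to the plane `xᵢ = s` makes the degree in `xᵢ` zero and raises no other degree. -/
lemma degreeOf_face_le (i j : Fin 3) (s : ℝ) (p : MvPolynomial (Fin 3) ℝ) :
    (aeval (fun j' : Fin 3 => if j' = i then (C s : MvPolynomial (Fin 3) ℝ) else X j')
      p).degreeOf j ≤ if j = i then 0 else p.degreeOf j := by
  rw [aeval_def, eval₂_eq']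
  refine (degreeOf_sum_le _ _ _).trans (Finset.sup_le fun m hm => ?_)
  refine (degreeOf_C_mul_le _ _ _).trans ((degreeOf_prod_le _ _ _).trans ?_)
  have key : ∀ n : Fin 3,
      ((if n = i then (C s : MvPolynomial (Fin 3) ℝ) else X n) ^ m n).degreeOf j ≤
        if j = n then (if j = i then 0 else m j) else 0 := by
    intro n
    refine (degreeOf_pow_le _ _ _).trans ?_
    by_cases hn : n = i
    · simp [hn]
    · rw [if_neg hn, degreeOf_X]
      by_cases hj : j = n
      · subst hj; simp [hn]
      · simp [hj]
  refine (Finset.sum_le_sum fun n _ => key n).trans ?_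
  rw [Finset.sum_ite_eq]
  have := le_degreeOf_of_mem_support j hm
  split_ifs <;> simp_all

/-- every `v ∈ V^k` has the degree structure
`deg_{x_i} v_i ≤ k+1`, `deg_{x_j} v_i ≤ k` for `j ≠ i`; consequently on each face of
`[-1,1]³` (substituting `x_i = s`, `s = ±1`) the normal component `± v_i |_{x_i = s}`
has degree at most `k` in each of the two face variables. -/
theorem degree_structure_of_Vk (k : ℕ) (hk : 1 ≤ k)
    (v : Fin 3 → MvPolynomial (Fin 3) ℝ) (hv : memV k v) :
    (∀ i : Fin 3, (v i).degreeOf i ≤ k + 1) ∧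
    (∀ i j : Fin 3, i ≠ j → (v i).degreeOf j ≤ k) ∧
    (∀ i : Fin 3, ∀ s : ℝ, s = 1 ∨ s = -1 → ∀ j : Fin 3,
      (C s * (aeval (fun j' : Fin 3 => if j' = i then (C s : MvPolynomial (Fin 3) ℝ)
        else X j') (v i))).degreeOf j ≤ k) := by
  have h := fun i n => degreeOf_le_of_memV hv i n
  refine ⟨fun i => by simpa using h i i, fun i j hij => by simpa [hij] using h i j, ?_⟩
  intro i s _ j
  refine (degreeOf_C_mul_le _ _ _).trans ((degreeOf_face_le i j s (v i)).trans ?_)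
  by_cases hj : j = i
  · simp [hj]
  · simpa [hj, Ne.symm hj] using h i j
end

section
/- Let F : ℝ³ → ℝ³ be a trilinear map, i.e., each component of F is a real polynomial of degree at most 1 in each of the variables x, y, z separately. Then every entry of the adjugate matrix adj(DF(x,y,z)) (the transpose of the cofactor matrix of the Jacobian matrix, equal to det(DF)·DF^{−1} wherever DF is invertible) is a polynomial in (x,y,z) of total degree at most 3. -/
/-!
A polynomial `g` of degree at most one in each of three variables is `a·xyz + q` with
`deg q ≤ 2`, so `∂ⱼg = a·∂ⱼ(xyz) + ∂ⱼq` with `deg ∂ⱼ(xyz) ≤ 2` and `deg ∂ⱼq ≤ 1`.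
Up to sign, an entry of the adjugate is a `2 × 2` minor `∂ⱼg ∂ₖh - ∂ₖg ∂ⱼh`. Its a priori
quartic part `a b (∂ⱼ(xyz) ∂ₖ(xyz) - ∂ₖ(xyz) ∂ⱼ(xyz))` vanishes, and every remaining product
contains a factor `∂q`, hence has degree at most `3`.
-/

open MvPolynomial Matrix

/-- The Jacobian matrix (of polynomials) of a polynomial map `f : ℝ³ → ℝ³`,
with `(i,j)` entry `∂ f_i / ∂ x_j`. -/
noncomputable def polyJacobian (f : Fin 3 → MvPolynomial (Fin 3) ℝ) :
    Matrix (Fin 3) (Fin 3) (MvPolynomial (Fin 3) ℝ) :=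
  Matrix.of fun i j => pderiv j (f i)

theorem totalDegree_pderiv_le_of_le_succ {p : MvPolynomial (Fin 3) ℝ} {n : ℕ}
    (hp : p.totalDegree ≤ n + 1) (j : Fin 3) : (pderiv j p).totalDegree ≤ n := by
  rw [p.as_sum, map_sum]
  refine totalDegree_finsetSum_le fun s hs => ?_
  rw [pderiv_monomial]
  by_cases h0 : s j = 0
  · simp [h0]
  refine (totalDegree_monomial_le _ _).trans ?_
  have h1 : (s.sum fun _ e => e) ≤ n + 1 := (le_totalDegree hs).trans hp
  rw [Finsupp.sum_fintype _ _ (fun _ => rfl)] at h1 ⊢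
  fin_cases j <;> simp [Fin.sum_univ_three] at h0 h1 ⊢ <;> omega

/-- A polynomial of degree at most one in each variable differs from a multiple of `xyz` by a
polynomial of total degree at most two. -/
theorem exists_eq_C_mul_add {g : MvPolynomial (Fin 3) ℝ} (hg : ∀ j, g.degreeOf j ≤ 1) :
    ∃ (a : ℝ) (q : MvPolynomial (Fin 3) ℝ), q.totalDegree ≤ 2 ∧
      g = C a * monomial (Finsupp.equivFunOnFinite.symm fun _ => 1) 1 + q := by
  set t : Fin 3 →₀ ℕ := Finsupp.equivFunOnFinite.symm fun _ => 1 with ht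
  refine ⟨g.coeff t, g - C (g.coeff t) * monomial t 1, ?_, by ring⟩
  refine Finset.sup_le fun s hs => ?_
  rw [mem_support_iff, coeff_sub, coeff_C_mul, coeff_monomial] at hs
  have hst : t ≠ s := by
    rintro rfl
    simp at hs
  have hs' : s ∈ g.support := by simpa [hst] using hs
  have hle (j : Fin 3) : s j ≤ 1 := (monomial_le_degreeOf j hs').trans (hg j)
  rw [Finsupp.sum_fintype _ _ (fun _ => rfl), Fin.sum_univ_three]
  by_contra! h
  refine hst (Finsupp.ext fun j => ?_)
  have := hle 0
  have := hle 1
  have := hle 2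
  fin_cases j <;> simp [ht] <;> omega

/-- The `2 × 2` minors of the Jacobian of a trilinear map have degree at most three. -/
theorem totalDegree_minor_le {g h : MvPolynomial (Fin 3) ℝ} (hg : ∀ j, g.degreeOf j ≤ 1)
    (hh : ∀ j, h.degreeOf j ≤ 1) (j k : Fin 3) :
    (pderiv j g * pderiv k h - pderiv k g * pderiv j h).totalDegree ≤ 3 := by
  obtain ⟨a, q, hq, rfl⟩ := exists_eq_C_mul_add hg
  obtain ⟨b, r, hr, rfl⟩ := exists_eq_C_mul_add hh
  set m : MvPolynomial (Fin 3) ℝ := monomial (Finsupp.equivFunOnFinite.symm fun _ => 1) 1 with hm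
  have hm3 : m.totalDegree ≤ 2 + 1 := by
    refine (totalDegree_monomial_le _ _).trans ?_
    rw [Finsupp.sum_fintype _ _ (fun _ => rfl)]
    simp
  have hM (c : ℝ) (i : Fin 3) : (C c * pderiv i m).totalDegree ≤ 2 := by
    refine (totalDegree_mul _ _).trans ?_
    rw [totalDegree_C, zero_add]
    exact totalDegree_pderiv_le_of_le_succ hm3 i
  have hQ := totalDegree_pderiv_le_of_le_succ (n := 1) hq
  have hR := totalDegree_pderiv_le_of_le_succ (n := 1) hr
  have mul_le {u v : MvPolynomial (Fin 3) ℝ} {c d : ℕ} (hu : u.totalDegree ≤ c)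
      (hv : v.totalDegree ≤ d) (hcd : c + d ≤ 3) : (u * v).totalDegree ≤ 3 :=
    (totalDegree_mul u v).trans ((add_le_add hu hv).trans hcd)
  have add_le {u v : MvPolynomial (Fin 3) ℝ} (hu : u.totalDegree ≤ 3)
      (hv : v.totalDegree ≤ 3) : (u + v).totalDegree ≤ 3 :=
    (totalDegree_add u v).trans (max_le hu hv)
  have sub_le {u v : MvPolynomial (Fin 3) ℝ} (hu : u.totalDegree ≤ 3)
      (hv : v.totalDegree ≤ 3) : (u - v).totalDegree ≤ 3 :=
    (totalDegree_sub u v).trans (max_le hu hv)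
  -- The quartic terms `a b ∂ⱼm ∂ₖm` of the two products cancel.
  have key : pderiv j (C a * m + q) * pderiv k (C b * m + r)
        - pderiv k (C a * m + q) * pderiv j (C b * m + r)
      = (C a * pderiv j m * pderiv k r + pderiv j q * (C b * pderiv k m)
          + pderiv j q * pderiv k r)
        - (C a * pderiv k m * pderiv j r + pderiv k q * (C b * pderiv j m)
          + pderiv k q * pderiv j r) := by
    simp only [map_add, pderiv_C_mul]
    ring
  rw [key]
  refine sub_le (add_le (add_le ?_ ?_) ?_) (add_le (add_le ?_ ?_) ?_)
  · exact mul_le (hM a j) (hR k) (by norm_num)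
  · exact mul_le (hQ j) (hM b k) (by norm_num)
  · exact mul_le (hQ j) (hR k) (by norm_num)
  · exact mul_le (hM a k) (hR j) (by norm_num)
  · exact mul_le (hQ k) (hM b j) (by norm_num)
  · exact mul_le (hQ k) (hR j) (by norm_num)

/-- for a trilinear map `F : ℝ³ → ℝ³` (each component of degree at most 1
in each variable separately), every entry of the adjugate of the Jacobian matrix `DF`
(equal to `det(DF)·DF⁻¹` wherever `DF` is invertible) is a polynomial of total degree
at most 3. -/
theorem trilinear_adjugate_degree (f : Fin 3 → MvPolynomial (Fin 3) ℝ)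
    (hf : ∀ i j : Fin 3, (f i).degreeOf j ≤ 1) :
    ∀ i j : Fin 3, ((polyJacobian f).adjugate i j).totalDegree ≤ 3 := by
  have minor (a b j k : Fin 3) := totalDegree_minor_le (hf a) (hf b) j k
  -- The entry `(i, j)` deletes row `j` and column `i`; the cyclic choice of the remaining
  -- indices absorbs the sign `(-1)^(i+j)`.
  have entry (i j : Fin 3) : (polyJacobian f).adjugate i j =
      pderiv (i + 1) (f (j + 1)) * pderiv (i + 2) (f (j + 2))
        - pderiv (i + 2) (f (j + 1)) * pderiv (i + 1) (f (j + 2)) := by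
    rw [adjugate_fin_three]
    fin_cases i <;> fin_cases j <;> simp [polyJacobian] <;> ring
  intro i j
  rw [entry]
  exact minor _ _ _ _
end

section
/- Let c > 0, h > 0 and let r₁, …, r₈ ∈ ℝ³ with r_{ij} = r_i − r_j. Define the trilinear map F(x,y,z) = r₁ + r₂₁x + r₄₁y + r₅₁z + (r₃₄ − r₂₁)xy + (r₆₅ − r₂₁)xz + (r₈₅ − r₄₁)yz + ((r₂₁ − r₃₄) − (r₆₅ − r₇₈))xyz. Assume |r₂₁| ≤ ch, |r₄₁| ≤ ch, |r₅₁| ≤ ch, |r₃₄ − r₂₁| ≤ ch², |r₆₅ − r₂₁| ≤ ch², |r₈₅ − r₄₁| ≤ ch², and |(r₂₁ − r₃₄) − (r₆₅ − r₇₈)| ≤ ch³ (i.e., F defines a regular h²-parallelepiped). Write the Jacobian determinant as J(x,y,z) = det DF(x,y,z) = Σ_{0 ≤ a+b+e ≤ 4} α_{abe} x^{a}y^{b}z^{e}. Then there is a constant C depending only on c (not on h or the vertices) such that |α_{abe}| ≤ C h^{a+b+e+3} for all admissible (a,b,e). -/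
/-!
The proof is the method of majorants, with a weight recording powers of `h`. Say that `P` majorizes
`p` with weight `k` if `|coeff m p| ≤ h ^ (|m| + k) * coeff m P` for every multi-index `m`. Weights
add under multiplication (`HMaj.mul`), constants of size `c h ^ k` have weight `k`, and a variable
has weight `-1`. Differentiation removes the constant term `r₁`, and the bounds on the other
coefficients make every entry of the Jacobian matrix majorized with weight `1`, by a polynomial
that depends on `c` and the column only (`pderiv_trilinear`, `hMaj_entry`). Each
of the six products in the determinant thus has weight `3`, with one common majorant independent of
`h`, and `6` times a bound for the coefficients of that majorant is the required constant.
-/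

open MvPolynomial Matrix

/-- The trilinear map of a hexahedron with vertices `r₁, …, r₈`, written componentwise
as a polynomial in the reference variables `(x, y, z)`:
`F = r₁ + r₂₁ x + r₄₁ y + r₅₁ z + (r₃₄-r₂₁) xy + (r₆₅-r₂₁) xz + (r₈₅-r₄₁) yz
  + ((r₂₁-r₃₄)-(r₆₅-r₇₈)) xyz`. -/
noncomputable def trilinF (r₁ r₂ r₃ r₄ r₅ r₆ r₇ r₈ : EuclideanSpace ℝ (Fin 3))
    (i : Fin 3) : MvPolynomial (Fin 3) ℝ :=
  C (r₁ i) + C ((r₂ - r₁) i) * X 0 + C ((r₄ - r₁) i) * X 1 + C ((r₅ - r₁) i) * X 2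
  + C (((r₃ - r₄) - (r₂ - r₁)) i) * (X 0 * X 1)
  + C (((r₆ - r₅) - (r₂ - r₁)) i) * (X 0 * X 2)
  + C (((r₈ - r₅) - (r₄ - r₁)) i) * (X 1 * X 2)
  + C ((((r₂ - r₁) - (r₃ - r₄)) - ((r₆ - r₅) - (r₇ - r₈))) i) * (X 0 * X 1 * X 2)

/-- The Jacobian determinant of `trilinF`, as a polynomial in `(x, y, z)`. -/
noncomputable def trilinJac (r₁ r₂ r₃ r₄ r₅ r₆ r₇ r₈ : EuclideanSpace ℝ (Fin 3)) :
    MvPolynomial (Fin 3) ℝ :=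
  (Matrix.of fun i j : Fin 3 => pderiv j (trilinF r₁ r₂ r₃ r₄ r₅ r₆ r₇ r₈ i)).det

/-- `HMaj h k p P`: the polynomial `P` majorizes `p` with weight `k` relative to the scale `h`, that
is, the coefficients of `p` are bounded by those of `h ^ k * P (h x, h y, h z)`. The weight is an
integer so that a variable, of weight `-1`, can be treated on its own. -/
def HMaj (h : ℝ) (k : ℤ) (p P : MvPolynomial (Fin 3) ℝ) : Prop :=
  ∀ m : Fin 3 →₀ ℕ, |p.coeff m| ≤ h ^ (((m 0 + m 1 + m 2 : ℕ) : ℤ) + k) * P.coeff m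

section HMaj

variable {h : ℝ} {k l : ℤ} {p q P Q : MvPolynomial (Fin 3) ℝ}

lemma HMaj.add (hp : HMaj h k p P) (hq : HMaj h k q Q) : HMaj h k (p + q) (P + Q) := by
  intro m
  rw [coeff_add, coeff_add, mul_add]
  exact (abs_add_le _ _).trans (add_le_add (hp m) (hq m))

lemma HMaj.mul (hh : 0 < h) (hp : HMaj h k p P) (hq : HMaj h l q Q) :
    HMaj h (k + l) (p * q) (P * Q) := by
  classical
  intro m
  rw [coeff_mul, coeff_mul, Finset.mul_sum]
  refine (Finset.abs_sum_le_sum_abs _ _).trans (Finset.sum_le_sum fun x hx => ?_)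
  rw [Finset.HasAntidiagonal.mem_antidiagonal] at hx
  have hw : h ^ (((m 0 + m 1 + m 2 : ℕ) : ℤ) + (k + l)) =
      h ^ (((x.1 0 + x.1 1 + x.1 2 : ℕ) : ℤ) + k) *
        h ^ (((x.2 0 + x.2 1 + x.2 2 : ℕ) : ℤ) + l) := by
    rw [← zpow_add₀ hh.ne', ← hx]
    congr 1
    simp only [Finsupp.add_apply]
    push_cast
    ring
  rw [abs_mul, hw, mul_mul_mul_comm]
  exact mul_le_mul (hp _) (hq _) (abs_nonneg _) ((abs_nonneg _).trans (hp _))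

lemma hMaj_C {a c : ℝ} (ha : |a| ≤ c * h ^ k) : HMaj h k (C a) (C c) := by
  classical
  intro m
  rw [coeff_C, coeff_C]
  split_ifs with hm
  · subst hm
    simpa [mul_comm] using ha
  · simp

lemma hMaj_X (i : Fin 3) : HMaj h (-1) (X i) (X i) := by
  classical
  intro m
  rw [coeff_X]
  split_ifs with hm
  · subst hm
    fin_cases i <;> simp
  · simp

end HMaj

/-- The common majorant of the entries in one column of the Jacobian matrix, `u` and `v` being the
two variables other than the one of differentiation. -/
noncomputable def entryMaj (c : ℝ) (u v : Fin 3) : MvPolynomial (Fin 3) ℝ :=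
  C c + C c * X u + C c * X v + C c * (X u * X v)

lemma hMaj_entry {h c a b d e : ℝ} (hh : 0 < h) (u v : Fin 3) (ha : |a| ≤ c * h)
    (hb : |b| ≤ c * h ^ 2) (hd : |d| ≤ c * h ^ 2) (he : |e| ≤ c * h ^ 3) :
    HMaj h 1 (C a + C b * X u + C d * X v + C e * (X u * X v)) (entryMaj c u v) := by
  have h1 : HMaj h 1 (C a) (C c) := hMaj_C (by simpa using ha)
  have h2 : HMaj h (2 + -1) (C b * X u) (C c * X u) :=
    (hMaj_C (by exact_mod_cast hb)).mul hh (hMaj_X u)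
  have h3 : HMaj h (2 + -1) (C d * X v) (C c * X v) :=
    (hMaj_C (by exact_mod_cast hd)).mul hh (hMaj_X v)
  have h4 : HMaj h (3 + (-1 + -1)) (C e * (X u * X v)) (C c * (X u * X v)) :=
    (hMaj_C (by exact_mod_cast he)).mul hh ((hMaj_X u).mul hh (hMaj_X v))
  norm_num at h2 h3 h4
  exact ((h1.add h2).add h3).add h4

lemma pderiv_trilinear (a₀ a₁ a₂ a₃ b₁ b₂ b₃ d : ℝ) :
    let f : MvPolynomial (Fin 3) ℝ := C a₀ + C a₁ * X 0 + C a₂ * X 1 + C a₃ * X 2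
      + C b₁ * (X 0 * X 1) + C b₂ * (X 0 * X 2) + C b₃ * (X 1 * X 2) + C d * (X 0 * X 1 * X 2)
    pderiv 0 f = C a₁ + C b₁ * X 1 + C b₂ * X 2 + C d * (X 1 * X 2) ∧
    pderiv 1 f = C a₂ + C b₁ * X 0 + C b₃ * X 2 + C d * (X 0 * X 2) ∧
    pderiv 2 f = C a₃ + C b₂ * X 0 + C b₃ * X 1 + C d * (X 0 * X 1) := by
  intro f
  refine ⟨?_, ?_, ?_⟩ <;>
    simp only [f, map_add, Derivation.leibniz, pderiv_C, pderiv_X, smul_eq_mul,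
      Pi.single_apply, Fin.reduceEq, if_true, if_false] <;> ring

/-- A determinant is a signed sum of six products, each taking one entry from every column, so a
majorant for each column controls it. -/
lemma abs_coeff_det_le {h : ℝ} (hh : 0 < h) (M : Matrix (Fin 3) (Fin 3) (MvPolynomial (Fin 3) ℝ))
    (P : Fin 3 → MvPolynomial (Fin 3) ℝ) (hM : ∀ i j, HMaj h 1 (M i j) (P j)) (m : Fin 3 →₀ ℕ) :
    |M.det.coeff m| ≤ 6 * (h ^ (m 0 + m 1 + m 2 + 3) * (P 0 * P 1 * P 2).coeff m) := by
  rw [Matrix.det_apply, coeff_sum]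
  refine (Finset.abs_sum_le_sum_abs _ _).trans ?_
  refine (Finset.sum_le_card_nsmul _ _
    (h ^ (m 0 + m 1 + m 2 + 3) * (P 0 * P 1 * P 2).coeff m) fun σ _ => ?_).trans ?_
  · have hprod := (((hM (σ 0) 0).mul hh (hM (σ 1) 1)).mul hh (hM (σ 2) 2)) m
    have hw : (((m 0 + m 1 + m 2 : ℕ) : ℤ) + (1 + 1 + 1)) = ((m 0 + m 1 + m 2 + 3 : ℕ) : ℤ) := by
      push_cast
      ring
    rw [hw, zpow_natCast] at hprod
    rw [Fin.prod_univ_three]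
    rcases Int.units_eq_one_or (Equiv.Perm.sign σ) with hs | hs <;> rw [hs] <;> simpa using hprod
  · simp [Fintype.card_perm, Nat.factorial]

lemma exists_coeff_le (P : MvPolynomial (Fin 3) ℝ) : ∃ B : ℝ, ∀ m, P.coeff m ≤ B := by
  refine ⟨∑ m ∈ P.support, |P.coeff m|, fun m => ?_⟩
  by_cases hm : m ∈ P.support
  · exact (le_abs_self _).trans
      (Finset.single_le_sum (f := fun m => |P.coeff m|) (fun _ _ => abs_nonneg _) hm)
  · rw [notMem_support_iff.mp hm]
    exact Finset.sum_nonneg fun _ _ => abs_nonneg _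

/-- for a regular `h²`-parallelepiped, the coefficients `α_{abe}` of the
Jacobian determinant `J = Σ α_{abe} x^a y^b z^e` satisfy `|α_{abe}| ≤ C h^{a+b+e+3}`
with `C` depending only on `c`. -/
theorem jacobian_coefficient_scaling (c : ℝ) (hc : 0 < c) :
    ∃ Cst : ℝ, ∀ (h : ℝ), 0 < h →
      ∀ r₁ r₂ r₃ r₄ r₅ r₆ r₇ r₈ : EuclideanSpace ℝ (Fin 3),
        ‖r₂ - r₁‖ ≤ c * h → ‖r₄ - r₁‖ ≤ c * h → ‖r₅ - r₁‖ ≤ c * h →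
        ‖(r₃ - r₄) - (r₂ - r₁)‖ ≤ c * h ^ 2 →
        ‖(r₆ - r₅) - (r₂ - r₁)‖ ≤ c * h ^ 2 →
        ‖(r₈ - r₅) - (r₄ - r₁)‖ ≤ c * h ^ 2 →
        ‖((r₂ - r₁) - (r₃ - r₄)) - ((r₆ - r₅) - (r₇ - r₈))‖ ≤ c * h ^ 3 →
        ∀ m : Fin 3 →₀ ℕ, m 0 + m 1 + m 2 ≤ 4 →
          |(trilinJac r₁ r₂ r₃ r₄ r₅ r₆ r₇ r₈).coeff m| ≤
            Cst * h ^ (m 0 + m 1 + m 2 + 3) := by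
  obtain ⟨B, hB⟩ := exists_coeff_le (entryMaj c 1 2 * entryMaj c 0 2 * entryMaj c 0 1)
  refine ⟨6 * B, ?_⟩
  intro h hh r₁ r₂ r₃ r₄ r₅ r₆ r₇ r₈ h2 h4 h5 h34 h65 h85 h7 m _
  have hcoord : ∀ {v : EuclideanSpace ℝ (Fin 3)} {b : ℝ}, ‖v‖ ≤ b → ∀ i, |v i| ≤ b :=
    fun {v} _ hv i => (PiLp.norm_apply_le v i).trans hv
  have key := abs_coeff_det_le hh
    (Matrix.of fun i j : Fin 3 => pderiv j (trilinF r₁ r₂ r₃ r₄ r₅ r₆ r₇ r₈ i))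
    ![entryMaj c 1 2, entryMaj c 0 2, entryMaj c 0 1] (by
      intro i j
      rw [Matrix.of_apply]
      obtain ⟨h0, h1, h2'⟩ := pderiv_trilinear (r₁ i) ((r₂ - r₁) i) ((r₄ - r₁) i) ((r₅ - r₁) i)
        (((r₃ - r₄) - (r₂ - r₁)) i) (((r₆ - r₅) - (r₂ - r₁)) i) (((r₈ - r₅) - (r₄ - r₁)) i)
        ((((r₂ - r₁) - (r₃ - r₄)) - ((r₆ - r₅) - (r₇ - r₈))) i)
      fin_cases j
      · change HMaj h 1 (pderiv 0 (trilinF r₁ r₂ r₃ r₄ r₅ r₆ r₇ r₈ i)) (entryMaj c 1 2)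
        rw [trilinF, h0]
        exact hMaj_entry hh 1 2 (hcoord h2 i) (hcoord h34 i) (hcoord h65 i) (hcoord h7 i)
      · change HMaj h 1 (pderiv 1 (trilinF r₁ r₂ r₃ r₄ r₅ r₆ r₇ r₈ i)) (entryMaj c 0 2)
        rw [trilinF, h1]
        exact hMaj_entry hh 0 2 (hcoord h4 i) (hcoord h34 i) (hcoord h85 i) (hcoord h7 i)
      · change HMaj h 1 (pderiv 2 (trilinF r₁ r₂ r₃ r₄ r₅ r₆ r₇ r₈ i)) (entryMaj c 0 1)
        rw [trilinF, h2']
        exact hMaj_entry hh 0 1 (hcoord h5 i) (hcoord h65 i) (hcoord h85 i) (hcoord h7 i))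
    m
  calc _ ≤ _ := key
    _ ≤ 6 * (h ^ (m 0 + m 1 + m 2 + 3) * B) := by
      gcongr
      exact hB m
    _ = 6 * B * h ^ (m 0 + m 1 + m 2 + 3) := by ring
end
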